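/- Let ℝ^N_+ = { y = (y_1,…,y_N) ∈ ℝ^N : y_1 > 0 } and S > 0. Let w ∈ C^{1,2}([0,S] × closure(ℝ^N_+); ℝ) satisfy |w(s,y)| ≤ e^{C_1|y|²} in (0,S) × ℝ^N_+ for some C_1 > 0. If w fulfills the differential inequality |w_s + Δw| ≤ C_2 |w| in (0,S) × ℝ^N_+ for some C_2 > 0, and w(0,y) = 0 for all y ∈ ℝ^N_+, then w ≡ 0 in [0,S) × ℝ^N_+. -/

import Mathlib

open MeasureTheory Filter Set Metric
open scoped ENNReal Topology

noncomputable section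

/-- The Laplacian of `f : ℝ^N → ℝ`, as the sum of second partial derivatives. -/
def lap {N : ℕ} (f : EuclideanSpace ℝ (Fin N) → ℝ) (x : EuclideanSpace ℝ (Fin N)) : ℝ :=
  ∑ i, fderiv ℝ (fun y => fderiv ℝ f y (EuclideanSpace.single i 1)) x (EuclideanSpace.single i 1)

namespace BU

abbrev EE (N : ℕ) := EuclideanSpace ℝ (Fin N)
abbrev XX (N : ℕ) := ℝ × EuclideanSpace ℝ (Fin N)

variable {N : ℕ}

def et : XX N := (1, 0)
def ei (i : Fin N) : XX N := (0, EuclideanSpace.single i 1)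

/-- directional derivative -/
def DD (v : XX N) (g : XX N → ℝ) : XX N → ℝ := fun p => fderiv ℝ g p v

/-- smooth functions -/
def Sm (g : XX N → ℝ) : Prop := ContDiff ℝ (⊤ : ℕ∞) g

lemma Sm.contDiff {g : XX N → ℝ} (h : Sm g) : ContDiff ℝ (⊤ : ℕ∞) g := h
lemma Sm.cont {g : XX N → ℝ} (h : Sm g) : Continuous g := ContDiff.continuous h
lemma Sm.diff {g : XX N → ℝ} (h : Sm g) : Differentiable ℝ g :=
  ContDiff.differentiable h (by simp)
lemma Sm.add {f g : XX N → ℝ} (hf : Sm f) (hg : Sm g) : Sm (fun p => f p + g p) :=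
  ContDiff.add hf hg
lemma Sm.sub {f g : XX N → ℝ} (hf : Sm f) (hg : Sm g) : Sm (fun p => f p - g p) :=
  ContDiff.sub hf hg
lemma Sm.mul {f g : XX N → ℝ} (hf : Sm f) (hg : Sm g) : Sm (fun p => f p * g p) :=
  ContDiff.mul hf hg
lemma Sm.const (c : ℝ) : Sm (fun _ : XX N => c) := contDiff_const
lemma Sm.sum {ι : Type*} {s : Finset ι} {f : ι → XX N → ℝ} (h : ∀ i ∈ s, Sm (f i)) :
    Sm (fun p => ∑ i ∈ s, f i p) := ContDiff.sum h
lemma Sm.DD {g : XX N → ℝ} (h : Sm g) (v : XX N) : Sm (DD v g) := by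
  unfold Sm BU.DD
  have h1 : ContDiff ℝ (⊤ : ℕ∞) (fderiv ℝ g) := ContDiff.fderiv_right h (by simp)
  exact h1.clm_apply contDiff_const

lemma DD_mul {f g : XX N → ℝ} (hf : Sm f) (hg : Sm g) (v : XX N) (p : XX N) :
    DD v (fun p => f p * g p) p = DD v f p * g p + f p * DD v g p := by
  unfold DD
  rw [fderiv_fun_mul (hf.diff p) (hg.diff p)]
  simp; ring

lemma DD_add {f g : XX N → ℝ} (hf : Sm f) (hg : Sm g) (v : XX N) (p : XX N) :
    DD v (fun p => f p + g p) p = DD v f p + DD v g p := by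
  unfold DD
  rw [fderiv_fun_add (hf.diff p) (hg.diff p)]
  simp

lemma DD_sum {ι : Type*} {s : Finset ι} {f : ι → XX N → ℝ} (h : ∀ i ∈ s, Sm (f i))
    (v : XX N) (p : XX N) :
    DD v (fun p => ∑ i ∈ s, f i p) p = ∑ i ∈ s, DD v (f i) p := by
  unfold DD
  rw [fderiv_fun_sum (fun i hi => (h i hi).diff p)]
  simp

lemma DD_comm {g : XX N → ℝ} (h : Sm g) (v v' : XX N) (p : XX N) :
    DD v (DD v' g) p = DD v' (DD v g) p := by
  have h1 : ContDiff ℝ (⊤ : ℕ∞) (fderiv ℝ g) := ContDiff.fderiv_right h (by simp)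
  have hd : DifferentiableAt ℝ (fderiv ℝ g) p := (h1.differentiable (by simp)) p
  have key : ∀ a b : XX N, DD a (DD b g) p = fderiv ℝ (fderiv ℝ g) p a b := by
    intro a b
    unfold DD
    rw [fderiv_clm_apply hd (differentiableAt_const b)]
    simp
  rw [key, key]
  have := (ContDiff.contDiffAt (x := p) h).isSymmSndFDerivAt (n := ((⊤ : ℕ∞) : WithTop ℕ∞))
    (by simp; exact WithTop.coe_le_coe.2 (le_top : (2 : ℕ∞) ≤ ⊤))
  exact this v v'

lemma DD_cs {g : XX N → ℝ} (h : HasCompactSupport g) (v : XX N) : HasCompactSupport (DD v g) := by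
  have := h.fderiv (𝕜 := ℝ)
  exact this.comp_left (g := fun l : XX N →L[ℝ] ℝ => l v) (by simp)

lemma integ {g : XX N → ℝ} (h : Continuous g) (hc : HasCompactSupport g) : Integrable g :=
  h.integrable_of_hasCompactSupport hc

instance instHaarXX : (volume : Measure (XX N)).IsAddHaarMeasure := by
  rw [Measure.volume_eq_prod]; infer_instance

/-- integrable with given integral -/
def HI (g : XX N → ℝ) (a : ℝ) : Prop := Integrable g ∧ ∫ p, g p = a
lemma HI.of {g : XX N → ℝ} (h : Integrable g) : HI g (∫ p, g p) := ⟨h, rfl⟩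
lemma HI.add {f g : XX N → ℝ} {a b : ℝ} (hf : HI f a) (hg : HI g b) :
    HI (fun p => f p + g p) (a + b) :=
  ⟨hf.1.add hg.1, by rw [integral_add hf.1 hg.1, hf.2, hg.2]⟩
lemma HI.sub {f g : XX N → ℝ} {a b : ℝ} (hf : HI f a) (hg : HI g b) :
    HI (fun p => f p - g p) (a - b) :=
  ⟨hf.1.sub hg.1, by rw [integral_sub hf.1 hg.1, hf.2, hg.2]⟩
lemma HI.cmul {f : XX N → ℝ} {a : ℝ} (c : ℝ) (hf : HI f a) :
    HI (fun p => c * f p) (c * a) :=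
  ⟨hf.1.const_mul c, by rw [integral_const_mul, hf.2]⟩
lemma HI.neg {f : XX N → ℝ} {a : ℝ} (hf : HI f a) :
    HI (fun p => - f p) (-a) :=
  ⟨hf.1.neg, by rw [integral_neg, hf.2]⟩
lemma HI.sum {f : Fin N → XX N → ℝ} {a : Fin N → ℝ} (hf : ∀ i, HI (f i) (a i)) :
    HI (fun p => ∑ i, f i p) (∑ i, a i) :=
  ⟨integrable_finsetSum _ fun i _ => (hf i).1, by
    rw [integral_finsetSum _ fun i _ => (hf i).1]; exact Finset.sum_congr rfl fun i _ => (hf i).2⟩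

lemma int_DD {g : XX N → ℝ} (h : Sm g) (hc : HasCompactSupport g) (v : XX N) :
    ∫ p, DD v g p = 0 := by
  have := integral_mul_fderiv_eq_neg_fderiv_mul_of_integrable (μ := (volume : Measure (XX N)))
    (f := fun _ => (1:ℝ)) (g := g) (v := v) (by simp)
    (by simpa using! integ (h.DD v).cont (DD_cs hc v)) (by simpa using integ h.cont hc)
    (by intros; exact differentiableAt_const _) (by intro x _; exact h.diff x)
  simpa [DD] using this

/-- heat operators -/
def LL (g : XX N → ℝ) (p : XX N) : ℝ := DD et g p + ∑ i, DD (ei i) (DD (ei i) g) p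
def LS (g : XX N → ℝ) (p : XX N) : ℝ := -DD et g p + ∑ i, DD (ei i) (DD (ei i) g) p

lemma Sm.LL {g : XX N → ℝ} (h : Sm g) : Sm (LL g) := by
  unfold BU.LL
  exact (h.DD _).add (Sm.sum fun i _ => (h.DD _).DD _)
lemma Sm.LS {g : XX N → ℝ} (h : Sm g) : Sm (LS g) := by
  unfold BU.LS
  exact (ContDiff.neg (h.DD _)).add (Sm.sum fun i _ => (h.DD _).DD _)

lemma int_eq_of_DD {A B F : XX N → ℝ} {c : ℝ} {v : XX N}
    (hA : Integrable A) (hB : Integrable B) (hF : Sm F) (hFc : HasCompactSupport F)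
    (h : ∀ p, A p - B p = c * DD v F p) : ∫ p, A p = ∫ p, B p := by
  have : ∫ p, (A p - B p) = 0 := by
    simp_rw [h]
    rw [integral_const_mul, int_DD hF hFc]; simp
  rw [integral_sub hA hB] at this
  linarith

section carl
variable {f k q : XX N → ℝ} {P : Fin N → XX N → ℝ}

lemma carleman_core (hf : Sm f) (hfc : HasCompactSupport f) (hk : Sm k) (hq : Sm q)
    (hP : ∀ j, Sm (P j)) (hDk : ∀ i p, DD (ei i) k p = 0)
    (hDP : ∀ i j p, DD (ei i) (P j) p = if i = j then -2 * k p else 0) :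
    ∫ p, 2 * ((∑ i, DD (ei i) (DD (ei i) f) p) + q p * f p) *
      (DD et f p - 2 * (∑ j, P j p * DD (ei j) f p) + (2 * N - 4) * (k p * f p))
    = ∫ p, (-DD et q p + 2 * (∑ j, P j p * DD (ei j) q p) - 8 * k p * q p) * (f p) ^ 2 := by
  have hfi : ∀ i, Sm (DD (ei i) f) := fun i => hf.DD _
  have hft : Sm (DD et f) := hf.DD _
  have hfii : ∀ i, Sm (DD (ei i) (DD (ei i) f)) := fun i => (hf.DD _).DD _
  have cfi : ∀ i, HasCompactSupport (DD (ei i) f) := fun i => DD_cs hfc _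
  have cft : HasCompactSupport (DD et f) := DD_cs hfc _
  have cfii : ∀ i, HasCompactSupport (DD (ei i) (DD (ei i) f)) := fun i => DD_cs (DD_cs hfc _) _
  have c0 := hf.cont
  have c1 := fun i => (hfi i).cont
  have c2 := hft.cont
  have c3 := fun i => (hfii i).cont
  have c4 := hk.cont
  have c5 := hq.cont
  have c6 := fun i => (hP i).cont
  have c7 := (hq.DD et).cont
  have c8 := fun i => (hq.DD (ei i)).cont
  -- T1
  have i1 : ∀ i, Integrable (fun p => DD (ei i) (DD (ei i) f) p * DD et f p) := fun i =>
    integ ((c3 i).mul c2) (cft.mul_left)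
  have T1 : ∀ i, ∫ p, DD (ei i) (DD (ei i) f) p * DD et f p = 0 := by
    intro i
    have s1 : ∫ p, DD (ei i) (DD (ei i) f) p * DD et f p
        = ∫ p, - (DD (ei i) f p * DD et (DD (ei i) f) p) := by
      apply int_eq_of_DD (c := 1) (v := ei i) (F := fun p => DD (ei i) f p * DD et f p) (i1 i)
        _ ((hfi i).mul hft) cft.mul_left
      · intro p
        rw [DD_mul (hfi i) hft, DD_comm hf (ei i) et]; ring
      · exact (integ ((c1 i).mul ((hfi i).DD et).cont) (cfi i).mul_right).neg
    have s2 : ∫ p, - (DD (ei i) f p * DD et (DD (ei i) f) p) = ∫ p : XX N, (0:ℝ) := by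
      apply int_eq_of_DD (c := -1/2) (v := et) (F := fun p => DD (ei i) f p * DD (ei i) f p) _
        (by simp) ((hfi i).mul (hfi i)) (cfi i).mul_left
      · intro p
        rw [DD_mul (hfi i) (hfi i)]; ring
      · exact (integ ((c1 i).mul ((hfi i).DD et).cont) (cfi i).mul_right).neg
    rw [s1, s2]; simp
  -- T2
  have ik : ∀ i, Integrable (fun p => k p * (DD (ei i) f p) ^ 2) := fun i => by
    simp_rw [pow_two]; exact integ (c4.mul ((c1 i).mul (c1 i))) (HasCompactSupport.mul_left (cfi i).mul_left)
  have i2 : ∀ i j, Integrable (fun p => DD (ei i) (DD (ei i) f) p * (P j p * DD (ei j) f p)) :=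
    fun i j => integ ((c3 i).mul ((c6 j).mul (c1 j))) (cfii i).mul_right
  have T2 : ∀ i j, ∫ p, DD (ei i) (DD (ei i) f) p * (P j p * DD (ei j) f p)
      = (if i = j then 2 else 0) * (∫ p, k p * (DD (ei i) f p) ^ 2)
        - ∫ p, k p * (DD (ei i) f p) ^ 2 := by
    intro i j
    have e1 : Integrable (fun p => (if i = j then 2 else 0) * (k p * (DD (ei i) f p) ^ 2)) :=
      (ik i).const_mul _
    have e2 : Integrable (fun p => P j p * (DD (ei i) f p * DD (ei j) (DD (ei i) f) p)) :=
      integ ((c6 j).mul ((c1 i).mul ((hfi i).DD _).cont))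
        (HasCompactSupport.mul_left (cfi i).mul_right)
    have s1 : ∫ p, DD (ei i) (DD (ei i) f) p * (P j p * DD (ei j) f p)
        = ∫ p, ((if i = j then 2 else 0) * (k p * (DD (ei i) f p) ^ 2)
            - P j p * (DD (ei i) f p * DD (ei j) (DD (ei i) f) p)) := by
      apply int_eq_of_DD (c := 1) (v := ei i)
        (F := fun p => DD (ei i) f p * (P j p * DD (ei j) f p)) (i2 i j)
        (e1.sub e2) ((hfi i).mul ((hP j).mul (hfi j))) (cfi i).mul_right
      intro p
      rw [DD_mul (hfi i) ((hP j).mul (hfi j)), DD_mul (hP j) (hfi j), hDP, DD_comm hf (ei i) (ei j)]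
      by_cases hij : i = j
      · subst hij; simp; ring
      · simp [hij]; ring
    have s2 : ∫ p, P j p * (DD (ei i) f p * DD (ei j) (DD (ei i) f) p)
        = ∫ p, k p * (DD (ei i) f p) ^ 2 := by
      apply int_eq_of_DD (c := 1/2) (v := ei j)
        (F := fun p => P j p * (DD (ei i) f p * DD (ei i) f p)) e2
        (ik i) ((hP j).mul ((hfi i).mul (hfi i))) (HasCompactSupport.mul_left (cfi i).mul_left)
      intro p
      rw [DD_mul (hP j) ((hfi i).mul (hfi i)), DD_mul (hfi i) (hfi i), hDP]
      simp; ring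
    rw [s1, integral_sub e1 e2, s2, integral_const_mul]
  -- T3
  have i3 : ∀ i, Integrable (fun p => DD (ei i) (DD (ei i) f) p * (k p * f p)) := fun i =>
    integ ((c3 i).mul (c4.mul c0)) (cfii i).mul_right
  have T3 : ∀ i, ∫ p, DD (ei i) (DD (ei i) f) p * (k p * f p) = - ∫ p, k p * (DD (ei i) f p) ^ 2 := by
    intro i
    rw [← integral_neg]
    apply int_eq_of_DD (c := 1) (v := ei i) (F := fun p => DD (ei i) f p * (k p * f p)) (i3 i)
        (ik i).neg ((hfi i).mul (hk.mul hf)) (cfi i).mul_right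
    intro p
    rw [DD_mul (hfi i) (hk.mul hf), DD_mul hk hf, hDk, Pi.neg_apply]; ring
  -- T4
  have f2c : HasCompactSupport (fun p => f p ^ 2) := by
    simp_rw [pow_two]; exact hfc.mul_left
  have i4 : Integrable (fun p => q p * f p * DD et f p) := integ ((c5.mul c0).mul c2) cft.mul_left
  have j4 : Integrable (fun p => DD et q p * f p ^ 2) := integ (c7.mul (c0.pow 2)) f2c.mul_left
  have T4 : ∫ p, q p * f p * DD et f p = ∫ p, (-1/2) * (DD et q p * f p ^ 2) := by
    apply int_eq_of_DD (c := 1/2) (v := et) (F := fun p => q p * (f p * f p)) i4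
        (j4.const_mul _) (hq.mul (hf.mul hf)) (HasCompactSupport.mul_left hfc.mul_left)
    intro p
    rw [DD_mul hq (hf.mul hf), DD_mul hf hf]; ring
  -- T5
  have i5 : ∀ j, Integrable (fun p => q p * f p * (P j p * DD (ei j) f p)) := fun j =>
    integ ((c5.mul c0).mul ((c6 j).mul (c1 j))) (HasCompactSupport.mul_left (cfi j).mul_left)
  have j5 : ∀ j, Integrable (fun p => P j p * DD (ei j) q p * f p ^ 2) := fun j =>
    integ (((c6 j).mul (c8 j)).mul (c0.pow 2)) f2c.mul_left
  have jk : Integrable (fun p => k p * q p * f p ^ 2) := integ ((c4.mul c5).mul (c0.pow 2)) f2c.mul_left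
  have T5 : ∀ j, ∫ p, q p * f p * (P j p * DD (ei j) f p)
      = ∫ p, ((-1/2) * (P j p * DD (ei j) q p * f p ^ 2) + k p * q p * f p ^ 2) := by
    intro j
    apply int_eq_of_DD (c := 1/2) (v := ei j) (F := fun p => q p * (P j p * (f p * f p))) (i5 j)
        (((j5 j).const_mul _).add jk) (hq.mul ((hP j).mul (hf.mul hf)))
        (HasCompactSupport.mul_left (HasCompactSupport.mul_left hfc.mul_left))
    intro p
    rw [DD_mul hq ((hP j).mul (hf.mul hf)), DD_mul (hP j) (hf.mul hf), DD_mul hf hf, hDP]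
    simp; ring
  have i6 : Integrable (fun p => q p * f p * (k p * f p)) :=
    integ ((c5.mul c0).mul (c4.mul c0)) (HasCompactSupport.mul_left hfc.mul_left)
  -- assembly
  have lhs : ∀ p, 2 * ((∑ i, DD (ei i) (DD (ei i) f) p) + q p * f p) *
      (DD et f p - 2 * (∑ j, P j p * DD (ei j) f p) + (2 * N - 4) * (k p * f p))
      = 2 * (∑ i, (DD (ei i) (DD (ei i) f) p * DD et f p
          - 2 * ∑ j, DD (ei i) (DD (ei i) f) p * (P j p * DD (ei j) f p)
          + (2 * N - 4) * (DD (ei i) (DD (ei i) f) p * (k p * f p))))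
        + (2 * (q p * f p * DD et f p) - 4 * (∑ j, q p * f p * (P j p * DD (ei j) f p))
        + 2 * (2 * N - 4) * (k p * q p * f p ^ 2)) := by
    intro p
    simp_rw [← Finset.mul_sum]
    rw [Finset.sum_add_distrib, Finset.sum_sub_distrib, ← Finset.sum_mul, ← Finset.mul_sum,
      ← Finset.mul_sum, ← Finset.sum_mul, ← Finset.sum_mul]
    ring
  have rhs : ∀ p, (-DD et q p + 2 * (∑ j, P j p * DD (ei j) q p) - 8 * k p * q p) * (f p) ^ 2
      = -(DD et q p * f p ^ 2) + 2 * (∑ j, P j p * DD (ei j) q p * f p ^ 2)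
        - 8 * (k p * q p * f p ^ 2) := by
    intro p
    rw [← Finset.sum_mul]; ring
  simp_rw [lhs, rhs]
  have A : ∀ i, HI (fun p => (DD (ei i) (DD (ei i) f) p * DD et f p
          - 2 * ∑ j, DD (ei i) (DD (ei i) f) p * (P j p * DD (ei j) f p)
          + (2 * N - 4) * (DD (ei i) (DD (ei i) f) p * (k p * f p)))) 0 := by
    intro i
    have h := ((HI.of (i1 i)).sub ((HI.sum fun j => HI.of (i2 i j)).cmul 2)).add
      ((HI.of (i3 i)).cmul (2 * N - 4))
    refine ⟨h.1, h.2.trans ?_⟩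
    rw [T1, T3]
    simp_rw [T2]
    rw [Finset.sum_sub_distrib, ← Finset.sum_mul]
    simp
    ring
  have B : ∀ j, ∫ p, q p * f p * (P j p * DD (ei j) f p)
      = (-1/2) * (∫ p, P j p * DD (ei j) q p * f p ^ 2) + ∫ p, k p * q p * f p ^ 2 := by
    intro j
    rw [T5, integral_add ((j5 j).const_mul _) jk, integral_const_mul]
  have hL := ((HI.sum A).cmul 2).add ((((HI.of i4).cmul 2).sub
    ((HI.sum fun j => HI.of (i5 j)).cmul 4)).add ((HI.of jk).cmul (2 * (2 * N - 4))))
  have hR := ((HI.of j4).neg.add ((HI.sum fun j => HI.of (j5 j)).cmul 2)).sub ((HI.of jk).cmul 8)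
  rw [hL.2, hR.2, T4, integral_const_mul]
  simp_rw [B]
  rw [Finset.sum_add_distrib, ← Finset.mul_sum]
  simp
  ring

end carl
end BU

namespace BU
variable {N : ℕ}

lemma Sm.exp {f : XX N → ℝ} (hf : Sm f) : Sm (fun p => Real.exp (f p)) := ContDiff.exp hf

lemma DD_exp {f : XX N → ℝ} (hf : Sm f) (v p : XX N) :
    DD v (fun p => Real.exp (f p)) p = DD v f p * Real.exp (f p) := by
  unfold DD
  rw [fderiv_exp (hf.diff p)]
  simp; ring

lemma DD_add' {f g : XX N → ℝ} (hf : Sm f) (hg : Sm g) (v : XX N) :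
    DD v (fun p => f p + g p) = fun p => DD v f p + DD v g p := funext (DD_add hf hg v)
lemma DD_mul' {f g : XX N → ℝ} (hf : Sm f) (hg : Sm g) (v : XX N) :
    DD v (fun p => f p * g p) = fun p => DD v f p * g p + f p * DD v g p := funext (DD_mul hf hg v)

lemma DD2_mul {f g : XX N → ℝ} (hf : Sm f) (hg : Sm g) (v p : XX N) :
    DD v (DD v (fun p => f p * g p)) p
      = DD v (DD v f) p * g p + 2 * (DD v f p * DD v g p) + f p * DD v (DD v g) p := by
  rw [DD_mul' hf hg, DD_add ((hf.DD v).mul hg) (hf.mul (hg.DD v)), DD_mul (hf.DD v) hg,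
    DD_mul hf (hg.DD v)]
  ring

lemma LL_mul {f g : XX N → ℝ} (hf : Sm f) (hg : Sm g) (p : XX N) :
    LL (fun p => f p * g p) p = LL f p * g p + f p * LL g p
      + 2 * ∑ i, DD (ei i) f p * DD (ei i) g p := by
  unfold LL
  rw [DD_mul hf hg]
  simp_rw [DD2_mul hf hg]
  rw [Finset.sum_add_distrib, Finset.sum_add_distrib, ← Finset.sum_mul, ← Finset.mul_sum,
    ← Finset.mul_sum]
  ring

lemma LL_cs {g : XX N → ℝ} (h : HasCompactSupport g) : HasCompactSupport (LL g) := by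
  have h1 := DD_cs h et
  have h2 : ∀ i : Fin N, HasCompactSupport (DD (ei i) (DD (ei i) g)) := fun i => DD_cs (DD_cs h _) _
  rw [hasCompactSupport_iff_eventuallyEq] at *
  have h3 : ∀ᶠ x in coclosedCompact (XX N), ∀ i : Fin N, DD (ei i) (DD (ei i) g) x = 0 := by
    rw [eventually_all]
    intro i
    have := h2 i
    rw [hasCompactSupport_iff_eventuallyEq] at this
    exact this
  filter_upwards [h1, h3] with x h1 h3
  simp [LL, h1, h3]

lemma LS_cs {g : XX N → ℝ} (h : HasCompactSupport g) : HasCompactSupport (LS g) := by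
  have h1 := DD_cs h et
  have h2 : ∀ i : Fin N, HasCompactSupport (DD (ei i) (DD (ei i) g)) := fun i => DD_cs (DD_cs h _) _
  rw [hasCompactSupport_iff_eventuallyEq] at *
  have h3 : ∀ᶠ x in coclosedCompact (XX N), ∀ i : Fin N, DD (ei i) (DD (ei i) g) x = 0 := by
    rw [eventually_all]
    intro i
    have := h2 i
    rw [hasCompactSupport_iff_eventuallyEq] at this
    exact this
  filter_upwards [h1, h3] with x h1 h3
  simp [LS, h1, h3]

/-- duality -/
lemma LL_dual {f g : XX N → ℝ} (hf : Sm f) (hfc : HasCompactSupport f) (hg : Sm g) :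
    ∫ p, f p * LL g p = ∫ p, g p * LS f p := by
  have c0 := hf.cont
  have c1 := hg.cont
  have i1 : Integrable (fun p => f p * DD et g p) :=
    integ (c0.mul (hg.DD et).cont) hfc.mul_right
  have i0 : Integrable (fun p => -(g p * DD et f p)) :=
    integ ((c1.mul (hf.DD _).cont).neg) ((DD_cs hfc _).mul_left.neg)
  have t1 : ∫ p, f p * DD et g p = ∫ p, -(g p * DD et f p) := by
    apply int_eq_of_DD (c := 1) (v := et) (F := fun p => f p * g p) i1 i0 (hf.mul hg) hfc.mul_right
    intro p; rw [DD_mul hf hg]; ring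
  have i2 : ∀ i, Integrable (fun p => f p * DD (ei i) (DD (ei i) g) p) := fun i =>
    integ (c0.mul ((hg.DD _).DD _).cont) hfc.mul_right
  have i3 : Integrable (fun p => g p * DD et f p) :=
    integ (c1.mul (hf.DD et).cont) (DD_cs hfc _).mul_left
  have i4 : ∀ i, Integrable (fun p => g p * DD (ei i) (DD (ei i) f) p) := fun i =>
    integ (c1.mul ((hf.DD _).DD _).cont) (DD_cs (DD_cs hfc _) _).mul_left
  have t2 : ∀ i, ∫ p, f p * DD (ei i) (DD (ei i) g) p = ∫ p, g p * DD (ei i) (DD (ei i) f) p := by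
    intro i
    apply int_eq_of_DD (c := 1) (v := ei i)
      (F := fun p => f p * DD (ei i) g p + (-1) * (g p * DD (ei i) f p))
      (i2 i) (i4 i)
      ((hf.mul (hg.DD _)).add ((Sm.const _).mul (hg.mul (hf.DD _))))
      (hfc.mul_right.add (HasCompactSupport.mul_left (DD_cs hfc _).mul_left))
    intro p
    rw [DD_add (hf.mul (hg.DD _)) ((Sm.const _).mul (hg.mul (hf.DD _))), DD_mul hf (hg.DD _),
      DD_mul (Sm.const _) (hg.mul (hf.DD _)), DD_mul hg (hf.DD _)]
    simp only [DD, fderiv_fun_const]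
    simp; ring
  have hL := (HI.of i1).add (HI.sum fun i => HI.of (i2 i))
  have hR := (HI.of i3).neg.add (HI.sum fun i => HI.of (i4 i))
  have e1 : ∀ p, f p * LL g p = f p * DD et g p + ∑ i, f p * DD (ei i) (DD (ei i) g) p := by
    intro p; rw [← Finset.mul_sum, LL]; ring
  have e2 : ∀ p, g p * LS f p = -(g p * DD et f p) + ∑ i, g p * DD (ei i) (DD (ei i) f) p := by
    intro p; rw [← Finset.mul_sum, LS]; ring
  simp_rw [e1, e2]
  rw [hL.2, hR.2, t1, integral_neg]
  simp_rw [t2]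

/-- potential -/
def qf (φ : XX N → ℝ) (p : XX N) : ℝ := (∑ j, DD (ei j) φ p * DD (ei j) φ p) + (-1) * DD et φ p

lemma Sm.qf {φ : XX N → ℝ} (h : Sm φ) : Sm (qf φ) := by
  unfold BU.qf
  exact (Sm.sum fun i _ => (h.DD _).mul (h.DD _)).add ((Sm.const _).mul (h.DD _))

def Zf (φ k : XX N → ℝ) (p : XX N) : ℝ :=
  -DD et (qf φ) p + 2 * (∑ j, DD (ei j) φ p * DD (ei j) (qf φ) p) - 8 * k p * qf φ p - 16 * k p ^ 2

lemma Zf_cont {φ k : XX N → ℝ} (h : Sm φ) (hk : Sm k) : Continuous (Zf φ k) := by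
  have h1 := (h.qf.DD et).cont
  have h2 : ∀ i, Continuous (DD (ei i) φ) := fun i => (h.DD (ei i)).cont
  have h3 : ∀ i, Continuous (DD (ei i) (BU.qf φ)) := fun i => (h.qf.DD (ei i)).cont
  have h4 := hk.cont
  have h5 := h.qf.cont
  unfold Zf
  fun_prop

lemma carleman {φ k v : XX N → ℝ} (hφ : Sm φ) (hk : Sm k) (hv : Sm v) (hvc : HasCompactSupport v)
    (hDk : ∀ i p, DD (ei i) k p = 0)
    (hDP : ∀ i j p, DD (ei i) (DD (ei j) φ) p = if i = j then -2 * k p else 0) :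
    ∫ p, Zf φ k p * (Real.exp (φ p) * v p) ^ 2 ≤ ∫ p, (Real.exp (φ p) * LL v p) ^ 2 := by
  set f : XX N → ℝ := fun p => Real.exp (φ p) * v p with hfdef
  have hE := hφ.exp
  have hf : Sm f := hE.mul hv
  have hfc : HasCompactSupport f := hvc.mul_left
  have core := carleman_core hf hfc hk hφ.qf (fun j => hφ.DD (ei j)) hDk hDP
  have sqc : ∀ g : XX N → ℝ, HasCompactSupport g → HasCompactSupport (fun p => g p ^ 2) := by
    intro g hg; simp_rw [pow_two]; exact hg.mul_left
  have hEE : ∀ p, Real.exp (φ p) * LL v p =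
      ((∑ i, DD (ei i) (DD (ei i) f) p) + qf φ p * f p) +
      (DD et f p - 2 * (∑ j, DD (ei j) φ p * DD (ei j) f p) + (2 * N - 4) * (k p * f p))
      + 4 * k p * f p := by
    intro p
    have d1 : ∀ w, DD w f p = DD w φ p * Real.exp (φ p) * v p + Real.exp (φ p) * DD w v p := by
      intro w; rw [hfdef, DD_mul hE hv, DD_exp hφ]
    have d2 : ∀ i, DD (ei i) (DD (ei i) f) p
        = Real.exp (φ p) * (-2 * k p * v p + DD (ei i) φ p * DD (ei i) φ p * v p
          + 2 * (DD (ei i) φ p * DD (ei i) v p) + DD (ei i) (DD (ei i) v) p) := by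
      intro i
      rw [hfdef, DD2_mul hE hv]
      have : DD (ei i) (fun p => Real.exp (φ p)) = fun p => DD (ei i) φ p * Real.exp (φ p) :=
        funext (DD_exp hφ _)
      rw [this, DD_mul (hφ.DD _) hE, DD_exp hφ, hDP]
      simp; ring
    have d3 : ∀ j, DD (ei j) φ p * DD (ei j) f p = Real.exp (φ p) * (DD (ei j) φ p * DD (ei j) φ p * v p
        + DD (ei j) φ p * DD (ei j) v p) := by
      intro j; rw [d1]; ring
    simp_rw [d2, d3]
    rw [d1, ← Finset.mul_sum, ← Finset.mul_sum, Finset.sum_add_distrib, Finset.sum_add_distrib,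
      Finset.sum_add_distrib, Finset.sum_add_distrib, ← Finset.sum_mul, ← Finset.mul_sum, qf, LL]
    simp only [hfdef, Finset.sum_const, Finset.card_univ, Fintype.card_fin, nsmul_eq_mul,
      ← Finset.sum_mul, ← Finset.mul_sum]
    ring
  have c1 : Continuous fun p => 2 * ((∑ i, DD (ei i) (DD (ei i) f) p) + qf φ p * f p) *
      (DD et f p - 2 * (∑ j, DD (ei j) φ p * DD (ei j) f p) + (2 * N - 4) * (k p * f p)) := by
    have h1 : ∀ i, Continuous (DD (ei i) (DD (ei i) f)) := fun i => ((hf.DD _).DD _).cont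
    have h2 := hφ.qf.cont
    have h3 := hf.cont
    have h4 := (hf.DD et).cont
    have h5 : ∀ i, Continuous (DD (ei i) f) := fun i => (hf.DD _).cont
    have h6 : ∀ i, Continuous (DD (ei i) φ) := fun i => (hφ.DD _).cont
    have h7 := hk.cont
    fun_prop
  have c2 : HasCompactSupport fun p => 2 * ((∑ i, DD (ei i) (DD (ei i) f) p) + qf φ p * f p) *
      (DD et f p - 2 * (∑ j, DD (ei j) φ p * DD (ei j) f p) + (2 * N - 4) * (k p * f p)) := by
    have h1 : HasCompactSupport (fun p => (∑ i, DD (ei i) (DD (ei i) f) p) + qf φ p * f p) := by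
      have e : (fun p => (∑ i, DD (ei i) (DD (ei i) f) p) + qf φ p * f p)
        = fun p => LL f p + ((-1) * DD et f p + qf φ p * f p) := by
        funext p; rw [LL]; ring
      rw [e]
      exact (LL_cs hfc).add ((HasCompactSupport.mul_left (DD_cs hfc _)).add hfc.mul_left)
    exact HasCompactSupport.mul_right (HasCompactSupport.mul_left h1)
  have i1 := integ c1 c2
  have i2 : Integrable (fun p => 16 * k p ^ 2 * f p ^ 2) :=
    integ ((continuous_const.mul (hk.cont.pow 2)).mul (hf.cont.pow 2)) (sqc f hfc).mul_left
  have i3 : Integrable (fun p => (Real.exp (φ p) * LL v p) ^ 2) :=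
    integ ((hE.cont.mul hv.LL.cont).pow 2) (sqc _ (LL_cs hvc).mul_left)
  have i4 : Integrable fun p => (-DD et (qf φ) p + 2 * (∑ j, DD (ei j) φ p * DD (ei j) (qf φ) p)
      - 8 * k p * qf φ p) * (f p) ^ 2 := by
    have : (fun p => (-DD et (qf φ) p + 2 * (∑ j, DD (ei j) φ p * DD (ei j) (qf φ) p)
      - 8 * k p * qf φ p) * (f p) ^ 2) = fun p => (Zf φ k p + 16 * k p ^ 2) * f p ^ 2 := by
      funext p; unfold Zf; ring
    rw [this]
    exact integ (((Zf_cont hφ hk).add (continuous_const.mul (hk.cont.pow 2))).mul (hf.cont.pow 2))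
      (sqc f hfc).mul_left
  have e1 : ∫ p, Zf φ k p * f p ^ 2 = ∫ p, ((-DD et (qf φ) p
      + 2 * (∑ j, DD (ei j) φ p * DD (ei j) (qf φ) p) - 8 * k p * qf φ p) * (f p) ^ 2
      - 16 * k p ^ 2 * f p ^ 2) := by
    congr 1; funext p; unfold Zf; ring
  rw [e1, integral_sub i4 i2, ← core, ← integral_sub i1 i2]
  apply integral_mono (i1.sub i2) i3
  intro p
  simp only [Pi.sub_apply]
  rw [hEE p]
  generalize (∑ i, DD (ei i) (DD (ei i) f) p) + qf φ p * f p = S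
  generalize (DD et f p - 2 * (∑ j, DD (ei j) φ p * DD (ei j) f p) + (2 * N - 4) * (k p * f p)) = B
  nlinarith [sq_nonneg (B + 4 * k p * f p), sq_nonneg (S + 4 * k p * f p)]

/-- weighted inequality for smooth `u` -/
lemma weighted {φ k u χ ψ h : XX N → ℝ} {C Pc : ℝ} (hφ : Sm φ) (hk : Sm k) (hu : Sm u)
    (hχ : Sm χ) (hχc : HasCompactSupport χ) (hψ : Sm ψ) (hψc : HasCompactSupport ψ)
    (hDk : ∀ i p, DD (ei i) k p = 0)
    (hDP : ∀ i j p, DD (ei i) (DD (ei j) φ) p = if i = j then -2 * k p else 0)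
    (hC : 0 ≤ C) (hPc : 0 ≤ Pc) (hψ0 : ∀ p, 0 ≤ ψ p)
    (hψχ : ∀ p, (∑ i, DD (ei i) χ p ^ 2) * Real.exp (φ p) ^ 2 ≤ Pc * ψ p)
    (hh : Continuous h) (huh : ∀ p, |u p| ≤ h p)
    (hLu : ∀ p, χ p ≠ 0 ∨ ψ p ≠ 0 → |LL u p| ≤ C * h p) :
    ∫ p, Zf φ k p * (Real.exp (φ p) * χ p) ^ 2 * u p ^ 2 ≤
      ∫ p, (3 * C ^ 2 * (Real.exp (φ p) * χ p) ^ 2 + 3 * (Real.exp (φ p) * LL χ p) ^ 2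
        + 12 * Pc * (1/2 * |LS ψ p| + C * ψ p)) * h p ^ 2 := by
  have hv : Sm (fun p => χ p * u p) := hχ.mul hu
  have hvc : HasCompactSupport (fun p => χ p * u p) := hχc.mul_right
  have car := carleman hφ hk hv hvc hDk hDP
  have sqc : ∀ g : XX N → ℝ, HasCompactSupport g → HasCompactSupport (fun p => g p ^ 2) := by
    intro g hg; simp_rw [pow_two]; exact hg.mul_left
  have hE := hφ.exp
  have e1 : ∀ p, Zf φ k p * (Real.exp (φ p) * χ p) ^ 2 * u p ^ 2
    = Zf φ k p * (Real.exp (φ p) * (χ p * u p)) ^ 2 := by intro p; ring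
  simp_rw [e1]
  refine car.trans ?_
  -- energy identity
  have dual := LL_dual hψ hψc (hu.mul hu)
  have hLuu : ∀ p, ψ p * LL (fun p => u p * u p) p
      = 2 * (ψ p * u p * LL u p) + 2 * (ψ p * ∑ i, DD (ei i) u p ^ 2) := by
    intro p; rw [LL_mul hu hu]; simp_rw [pow_two]; ring
  have j1 : Integrable (fun p => ψ p * LL (fun p => u p * u p) p) :=
    integ (hψ.cont.mul (hu.mul hu).LL.cont) hψc.mul_right
  have j2 : Integrable (fun p => ψ p * u p * LL u p) :=
    integ ((hψ.cont.mul hu.cont).mul hu.LL.cont) (HasCompactSupport.mul_right hψc.mul_right)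
  have j3 : Integrable (fun p => u p * u p * LS ψ p) :=
    integ ((hu.cont.mul hu.cont).mul hψ.LS.cont) (LS_cs hψc).mul_left
  have j4 : Integrable (fun p => (3 * C ^ 2 * (Real.exp (φ p) * χ p) ^ 2
      + 3 * (Real.exp (φ p) * LL χ p) ^ 2) * h p ^ 2) := by
    refine integ ?_ (HasCompactSupport.mul_right (HasCompactSupport.add
      (HasCompactSupport.mul_left (sqc _ hχc.mul_left))
      (HasCompactSupport.mul_left (sqc _ (LL_cs hχc).mul_left))))
    have := hE.cont
    have := hχ.cont
    have := hχ.LL.cont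
    fun_prop
  have j5 : Integrable (fun p => 12 * Pc * (1/2 * |LS ψ p| + C * ψ p) * h p ^ 2) := by
    refine integ ?_ (HasCompactSupport.mul_right (HasCompactSupport.mul_left (HasCompactSupport.add
      (HasCompactSupport.mul_left ?_)
      (HasCompactSupport.mul_left hψc))))
    · have := hψ.LS.cont
      have := hψ.cont
      fun_prop
    · exact (LS_cs hψc).comp_left (g := fun x => |x|) (by simp)
  have i3 : Integrable (fun p => (Real.exp (φ p) * LL (fun p => χ p * u p) p) ^ 2) :=
    integ ((hE.cont.mul hv.LL.cont).pow 2) (sqc _ (LL_cs hvc).mul_left)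
  have hl := (HI.of j4).add ((((HI.of j1).cmul (1/2)).sub (HI.of j2)).cmul (12 * Pc))
  have step1 : ∫ p, (Real.exp (φ p) * LL (fun p => χ p * u p) p) ^ 2 ≤
      ∫ p, ((3 * C ^ 2 * (Real.exp (φ p) * χ p) ^ 2
      + 3 * (Real.exp (φ p) * LL χ p) ^ 2) * h p ^ 2 + 12 * Pc * (1/2 * (ψ p * LL (fun p => u p * u p) p)
        - ψ p * u p * LL u p)) := by
    apply integral_mono i3 hl.1
    intro p
    simp only
    rw [LL_mul hχ hu]
    have cs := Finset.sum_mul_sq_le_sq_mul_sq Finset.univ (fun i => DD (ei i) χ p) (fun i => DD (ei i) u p)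
    have b1 : (χ p * LL u p) ^ 2 ≤ χ p ^ 2 * (C ^ 2 * h p ^ 2) := by
      by_cases hz : χ p = 0
      · simp [hz]
      · rw [mul_pow, ← mul_pow C]
        exact mul_le_mul_of_nonneg_left (sq_le_sq' (by linarith [(abs_le.1 (hLu p (Or.inl hz))).1])
          (abs_le.1 (hLu p (Or.inl hz))).2) (sq_nonneg _)
    have b2 : u p ^ 2 ≤ h p ^ 2 :=
      sq_le_sq' (by linarith [(abs_le.1 (huh p)).1]) (abs_le.1 (huh p)).2
    have b3 : Real.exp (φ p) ^ 2 * (∑ i, DD (ei i) χ p * DD (ei i) u p) ^ 2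
        ≤ Pc * (ψ p * ∑ i, DD (ei i) u p ^ 2) := by
      have s0 : 0 ≤ ∑ i, DD (ei i) u p ^ 2 := Finset.sum_nonneg fun i _ => sq_nonneg _
      calc _ ≤ Real.exp (φ p) ^ 2 * ((∑ i, DD (ei i) χ p ^ 2) * ∑ i, DD (ei i) u p ^ 2) :=
            mul_le_mul_of_nonneg_left cs (sq_nonneg _)
        _ = ((∑ i, DD (ei i) χ p ^ 2) * Real.exp (φ p) ^ 2) * ∑ i, DD (ei i) u p ^ 2 := by ring
        _ ≤ (Pc * ψ p) * ∑ i, DD (ei i) u p ^ 2 := mul_le_mul_of_nonneg_right (hψχ p) s0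
        _ = _ := by ring
    have b4 : 1/2 * (ψ p * LL (fun p => u p * u p) p) - ψ p * u p * LL u p
        = ψ p * ∑ i, DD (ei i) u p ^ 2 := by rw [hLuu]; ring
    rw [b4]
    generalize (∑ i, DD (ei i) χ p * DD (ei i) u p) = Y at *
    have E2 := sq_nonneg (Real.exp (φ p))
    have three : ∀ x y z : ℝ, (x + y + z) ^ 2 ≤ 3 * x ^ 2 + 3 * y ^ 2 + 3 * z ^ 2 := by
      intro x y z; nlinarith [sq_nonneg (x - y), sq_nonneg (y - z), sq_nonneg (x - z)]
    have b5 := three (χ p * LL u p) (LL χ p * u p) (2 * Y)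
    have b6 : (LL χ p * u p) ^ 2 ≤ LL χ p ^ 2 * h p ^ 2 := by
      rw [mul_pow]; exact mul_le_mul_of_nonneg_left b2 (sq_nonneg _)
    calc _ = Real.exp (φ p) ^ 2 * (χ p * LL u p + LL χ p * u p + 2 * Y) ^ 2 := by ring
      _ ≤ Real.exp (φ p) ^ 2 * (3 * (χ p ^ 2 * (C ^ 2 * h p ^ 2)) + 3 * (LL χ p ^ 2 * h p ^ 2)
          + 3 * (2 * Y) ^ 2) := mul_le_mul_of_nonneg_left (by linarith) E2
      _ = 3 * C ^ 2 * (Real.exp (φ p) * χ p) ^ 2 * h p ^ 2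
          + 3 * (Real.exp (φ p) * LL χ p) ^ 2 * h p ^ 2 + 12 * (Real.exp (φ p) ^ 2 * Y ^ 2) := by ring
      _ ≤ _ := by linarith
  refine step1.trans ?_
  have e2 : ∀ p, (3 * C ^ 2 * (Real.exp (φ p) * χ p) ^ 2 + 3 * (Real.exp (φ p) * LL χ p) ^ 2
        + 12 * Pc * (1/2 * |LS ψ p| + C * ψ p)) * h p ^ 2 = (3 * C ^ 2 * (Real.exp (φ p) * χ p) ^ 2
      + 3 * (Real.exp (φ p) * LL χ p) ^ 2) * h p ^ 2 + 12 * Pc * (1/2 * |LS ψ p| + C * ψ p) * h p ^ 2 := by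
    intro p; ring
  simp_rw [e2]
  have hr := (HI.of j4).add (((HI.of j3).cmul (1/2)).sub (HI.of j2) |>.cmul (12 * Pc))
  rw [hl.2, dual, ← hr.2]
  apply integral_mono hr.1 ((HI.of j4).add (HI.of j5)).1
  intro p
  simp only
  have b2 : u p ^ 2 ≤ h p ^ 2 :=
      sq_le_sq' (by linarith [(abs_le.1 (huh p)).1]) (abs_le.1 (huh p)).2
  have h0 : 0 ≤ h p := (abs_nonneg _).trans (huh p)
  have b3 : u p * u p * LS ψ p ≤ |LS ψ p| * h p ^ 2 := by
    calc u p * u p * LS ψ p = u p ^ 2 * LS ψ p := by ring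
      _ ≤ u p ^ 2 * |LS ψ p| := mul_le_mul_of_nonneg_left (le_abs_self _) (sq_nonneg _)
      _ ≤ h p ^ 2 * |LS ψ p| := mul_le_mul_of_nonneg_right b2 (abs_nonneg _)
      _ = _ := by ring
  have b4 : -(ψ p * u p * LL u p) ≤ C * ψ p * h p ^ 2 := by
    by_cases hz : ψ p = 0
    · simp [hz]
    · have := hLu p (Or.inr hz)
      have h1 : |u p * LL u p| ≤ h p * (C * h p) := by
        rw [abs_mul]; exact mul_le_mul (huh p) this (abs_nonneg _) h0
      have h2 : -(u p * LL u p) ≤ h p * (C * h p) := (neg_le_abs _).trans h1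
      calc _ = ψ p * (-(u p * LL u p)) := by ring
        _ ≤ ψ p * (h p * (C * h p)) := mul_le_mul_of_nonneg_left h2 (hψ0 p)
        _ = _ := by ring
  have : 12 * Pc * (1/2 * (u p * u p * LS ψ p) - ψ p * u p * LL u p)
      ≤ 12 * Pc * (1/2 * |LS ψ p| + C * ψ p) * h p ^ 2 := by
    rw [mul_assoc (12 * Pc)]
    apply mul_le_mul_of_nonneg_left _ (by positivity)
    linarith
  linarith

end BU

namespace BU
variable {N : ℕ}

/-- pointwise second derivative at zero -/
def Has2 (g : ℝ → ℝ) (d : ℝ) : Prop :=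
  ∃ g' : ℝ → ℝ, (∀ᶠ s in 𝓝 0, HasDerivAt g (g' s) s) ∧ HasDerivAt g' d 0

lemma Has2.add {f g : ℝ → ℝ} {a b : ℝ} (hf : Has2 f a) (hg : Has2 g b) :
    Has2 (fun s => f s + g s) (a + b) := by
  obtain ⟨f', h1, h2⟩ := hf
  obtain ⟨g', h3, h4⟩ := hg
  refine ⟨fun s => f' s + g' s, ?_, h2.add h4⟩
  filter_upwards [h1, h3] with s a b using a.add b

lemma Has2.cmul {f : ℝ → ℝ} {a : ℝ} (c : ℝ) (hf : Has2 f a) :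
    Has2 (fun s => c * f s) (c * a) := by
  obtain ⟨f', h1, h2⟩ := hf
  refine ⟨fun s => c * f' s, ?_, h2.const_mul c⟩
  filter_upwards [h1] with s a using a.const_mul c

lemma Has2.zero : Has2 (fun _ => 0) 0 :=
  ⟨fun _ => 0, Eventually.of_forall fun s => hasDerivAt_const s 0, hasDerivAt_const _ _⟩

lemma Has2.sum {ι : Type*} {s : Finset ι} {f : ι → ℝ → ℝ} {a : ι → ℝ}
    (h : ∀ i ∈ s, Has2 (f i) (a i)) : Has2 (fun x => ∑ i ∈ s, f i x) (∑ i ∈ s, a i) := by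
  classical
  induction s using Finset.induction_on with
  | empty => simpa using Has2.zero
  | insert i s hi ih =>
    simp_rw [Finset.sum_insert hi]
    exact (h i (by simp)).add (ih fun j hj => h j (by simp [hj]))

lemma Has2.le_zero {g : ℝ → ℝ} {d : ℝ} (h : Has2 g d) (hm : IsLocalMax g 0) : d ≤ 0 := by
  by_contra hd
  push Not at hd
  obtain ⟨g', h1, h2⟩ := h
  have e : deriv g =ᶠ[𝓝 0] g' := h1.mono fun s hs => hs.deriv
  have dd : deriv (deriv g) 0 = d := by rw [e.deriv_eq]; exact h2.deriv
  have hmin := isLocalMin_of_deriv_deriv_pos (f := g) (x₀ := 0) (by rw [dd]; exact hd) hm.deriv_eq_zero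
    h1.self_of_nhds.continuousAt
  have hc : g =ᶠ[𝓝 0] fun _ => g 0 := by
    filter_upwards [hm, hmin] with s a b using le_antisymm a b
  have : deriv g =ᶠ[𝓝 0] fun _ => 0 := by
    have := hc.deriv
    simpa using this
  have : deriv (deriv g) 0 = 0 := by rw [this.deriv_eq]; simp
  linarith

/-- pointwise differential inequality -/
def PW (V : XX N → ℝ) (C : ℝ) (p : XX N) : Prop :=
  ∃ d0 : ℝ, ∃ d : Fin N → ℝ, HasDerivAt (fun s : ℝ => V (p + s • et)) d0 0 ∧
    (∀ i, Has2 (fun s => V (p + s • ei i)) (d i)) ∧ |d0 + ∑ i, d i| ≤ C * |V p|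

lemma PW.neg {V : XX N → ℝ} {C : ℝ} {p : XX N} (h : PW V C p) : PW (fun q => - V q) C p := by
  obtain ⟨d0, d, h1, h2, h3⟩ := h
  refine ⟨-d0, fun i => -d i, h1.neg, fun i => ?_, ?_⟩
  · have := (h2 i).cmul (-1)
    simpa using this
  · rw [abs_neg, Finset.sum_neg_distrib, ← neg_add, abs_neg]; exact h3

lemma hasDerivAt_line {g : XX N → ℝ} (hg : Sm g) (p v : XX N) (s : ℝ) :
    HasDerivAt (fun s : ℝ => g (p + s • v)) (DD v g (p + s • v)) s := by
  have h1 : HasDerivAt (fun s : ℝ => p + s • v) v s := by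
    simpa using ((hasDerivAt_id s).smul_const v).const_add p
  exact (hg.diff (p + s • v)).hasFDerivAt.comp_hasDerivAt s h1

lemma has2_of_sm {g : XX N → ℝ} (hg : Sm g) (p v : XX N) :
    Has2 (fun s : ℝ => g (p + s • v)) (DD v (DD v g) p) := by
  refine ⟨fun s => DD v g (p + s • v), Eventually.of_forall fun s => hasDerivAt_line hg p v s, ?_⟩
  simpa using hasDerivAt_line (hg.DD v) p v 0

/-- Riemann sums -/
lemma riem {φ : XX N → ℝ} (hφ : Continuous φ) (hc : HasCompactSupport φ) (h0 : ∀ p, 0 ≤ φ p)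
    {γ : ℝ} (hγ : 0 < γ) : ∃ (s : Finset (XX N)) (c : XX N → ℝ), (∀ y ∈ s, y ∈ tsupport φ) ∧
      (∀ y, 0 ≤ c y) ∧ ∀ (F : XX N → ℝ) (δ : ℝ), Continuous F →
      (∀ y ∈ tsupport φ, ∀ z ∈ tsupport φ, dist z y < γ → |F y - F z| ≤ δ) →
      |∑ y ∈ s, c y * F y - ∫ z, F z * φ z| ≤ δ * ∫ z, φ z := by
  obtain ⟨s, hs, hcov⟩ := hc.isCompact.elim_nhds_subcover (fun y => ball y γ)
    (fun y _ => ball_mem_nhds y hγ)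
  set b : XX N → XX N → ℝ := fun y z => max 0 (γ - dist z y) with hb
  have b0 : ∀ y z, 0 ≤ b y z := fun y z => le_max_left _ _
  have bc : ∀ y, Continuous (b y) := fun y => by
    rw [hb]; fun_prop
  set B : XX N → ℝ := fun z => ∑ y ∈ s, b y z with hB
  have B0 : ∀ z, 0 ≤ B z := fun z => Finset.sum_nonneg fun y _ => b0 y z
  have Bc : Continuous B := continuous_finsetSum _ fun y _ => bc y
  have Bp : ∀ z ∈ tsupport φ, 0 < B z := by
    intro z hz
    obtain ⟨y, hy, hzy⟩ := mem_iUnion₂.1 (hcov hz)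
    refine lt_of_lt_of_le ?_ (Finset.single_le_sum (f := fun y => b y z) (fun y _ => b0 y z) hy)
    rw [hb]; exact lt_max_of_lt_right (by rw [mem_ball] at hzy; linarith)
  set m : XX N → XX N → ℝ := fun y z => φ z * (b y z / B z) with hm
  have m0 : ∀ y z, 0 ≤ m y z := fun y z => mul_nonneg (h0 z) (div_nonneg (b0 y z) (B0 z))
  have msum : ∀ z, ∑ y ∈ s, m y z = φ z := by
    intro z
    rw [hm, ← Finset.mul_sum, ← Finset.sum_div]
    by_cases hz : z ∈ tsupport φ
    · rw [div_self (Bp z hz).ne', mul_one]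
    · rw [image_eq_zero_of_notMem_tsupport hz, zero_mul]
  have mF : ∀ y ∈ s, ∀ F : XX N → ℝ, Continuous F → Integrable (fun z => F z * m y z) := by
    intro y hy F hF
    have i1 : Integrable (fun z => |F z| * φ z) := integ (hF.abs.mul hφ) hc.mul_left
    refine i1.mono' ?_ (Eventually.of_forall fun z => ?_)
    · exact (hF.measurable.mul (hφ.measurable.mul ((bc y).measurable.div Bc.measurable))).aestronglyMeasurable
    · rw [norm_mul, Real.norm_eq_abs, Real.norm_eq_abs, abs_of_nonneg (m0 y z)]
      apply mul_le_mul_of_nonneg_left _ (abs_nonneg _)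
      rw [← msum z]
      exact Finset.single_le_sum (f := fun y => m y z) (fun y _ => m0 y z) hy
  refine ⟨s, fun y => ∫ z, m y z, hs, fun y => integral_nonneg (m0 y), ?_⟩
  intro F δ hF hvar
  have i1 : ∀ y ∈ s, Integrable (fun z => m y z) := fun y hy => by
    simpa using mF y hy (fun _ => 1) continuous_const
  have iφ : Integrable φ := integ hφ hc
  have e : ∑ y ∈ s, (∫ z, m y z) * F y - ∫ z, F z * φ z = ∫ z, ∑ y ∈ s, (F y - F z) * m y z := by
    have j : ∀ y ∈ s, Integrable (fun z => (F y - F z) * m y z) := fun y hy =>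
      mF y hy (fun z => F y - F z) (continuous_const.sub hF)
    rw [integral_finsetSum _ j]
    have e1 : ∀ z, F z * φ z = ∑ y ∈ s, F z * m y z := fun z => by rw [← Finset.mul_sum, msum]
    simp_rw [e1]
    rw [integral_finsetSum _ fun y hy => mF y hy F hF, ← Finset.sum_sub_distrib]
    refine Finset.sum_congr rfl fun y hy => ?_
    rw [mul_comm, ← integral_const_mul, ← integral_sub ((i1 y hy).const_mul _) (mF y hy F hF)]
    simp_rw [sub_mul]
  rw [e, ← integral_const_mul, ← Real.norm_eq_abs]
  refine norm_integral_le_of_norm_le (iφ.const_mul δ) (Eventually.of_forall fun z => ?_)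
  rw [Real.norm_eq_abs]
  refine (Finset.abs_sum_le_sum_abs _ _).trans ?_
  rw [← msum z, Finset.mul_sum]
  refine Finset.sum_le_sum fun y hy => ?_
  rw [abs_mul, abs_of_nonneg (m0 y z)]
  by_cases hz : z ∈ tsupport φ ∧ dist z y < γ
  · exact mul_le_mul_of_nonneg_right (hvar y (hs y hy) z hz.1 hz.2) (m0 y z)
  · have : m y z = 0 := by
      rw [hm]
      by_cases h1 : z ∈ tsupport φ
      · have : γ - dist z y ≤ 0 := by
          by_contra h2; exact hz ⟨h1, by linarith⟩
        simp [hb, this]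
      · simp [image_eq_zero_of_notMem_tsupport h1]
    simp [this]

/-- convolution -/
def Cv (ρ V : XX N → ℝ) (p : XX N) : ℝ := ∫ z, V z * ρ (p - z)

open scoped Convolution in
lemma Cv_eq (ρ V : XX N → ℝ) : Cv ρ V = V ⋆[ContinuousLinearMap.lsmul ℝ ℝ, volume] ρ := by
  funext p; simp [Cv, convolution_def]

lemma Cv_flip (ρ V : XX N → ℝ) (p : XX N) : Cv ρ V p = ∫ z, V (p - z) * ρ z := by
  unfold Cv
  rw [← integral_sub_left_eq_self (fun z => V (p - z) * ρ z) volume p]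
  simp

lemma Sm.Cv {ρ V : XX N → ℝ} (hρ : Sm ρ) (hc : HasCompactSupport ρ) (hV : Continuous V) :
    Sm (Cv ρ V) := by
  rw [Cv_eq]
  exact hc.contDiff_convolution_right _ hV.locallyIntegrable hρ

lemma DD_Cv {ρ V : XX N → ℝ} (hρ : Sm ρ) (hc : HasCompactSupport ρ) (hV : Continuous V)
    (v : XX N) : DD v (Cv ρ V) = Cv (DD v ρ) V := by
  funext p
  rw [Cv_eq, Cv_eq, DD]
  have h1 : ContDiff ℝ 1 ρ := ContDiff.of_le hρ (by simp)
  rw [(hc.hasFDerivAt_convolution_right (ContinuousLinearMap.lsmul ℝ ℝ) hV.locallyIntegrable h1 p).fderiv]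
  rw [convolution_precompR_apply _ hV.locallyIntegrable (hc.fderiv (𝕜 := ℝ))
    (h1.continuous_fderiv (by simp))]
  rfl

lemma Cv_int {ρ V : XX N → ℝ} (hρ : Continuous ρ) (hc : HasCompactSupport ρ) (hV : Continuous V)
    (p : XX N) : Integrable (fun z => V z * ρ (p - z)) := by
  refine integ (hV.mul (by fun_prop)) (HasCompactSupport.mul_left ?_)
  exact hc.comp_homeomorph (Homeomorph.subLeft p)

lemma LL_Cv {ρ V : XX N → ℝ} (hρ : Sm ρ) (hc : HasCompactSupport ρ) (hV : Continuous V) :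
    LL (Cv ρ V) = Cv (LL ρ) V := by
  funext p
  unfold LL
  rw [DD_Cv hρ hc hV]
  simp_rw [DD_Cv hρ hc hV, DD_Cv (hρ.DD _) (DD_cs hc _) hV]
  have i1 := Cv_int (hρ.DD et).cont (DD_cs hc _) hV p
  have i2 : ∀ i : Fin N, _ := fun i =>
    Cv_int ((hρ.DD (ei i)).DD (ei i)).cont (DD_cs (DD_cs hc _) _) hV p
  have := (HI.of i1).add (HI.sum fun i => HI.of (i2 i))
  unfold Cv
  rw [← this.2]
  congr 1; funext z
  simp only
  rw [← Finset.mul_sum]; ring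

lemma DD_refl {ρ : XX N → ℝ} (hρ : Sm ρ) (p v : XX N) :
    DD v (fun z => ρ (p - z)) = fun z => - DD v ρ (p - z) := by
  funext z
  unfold DD
  have h1 : HasFDerivAt (fun z : XX N => p - z) (-(ContinuousLinearMap.id ℝ (XX N))) z :=
    (hasFDerivAt_id z).const_sub p
  have h2 : HasFDerivAt (fun z : XX N => ρ (p - z)) _ z :=
    HasFDerivAt.comp z (hρ.diff (p - z)).hasFDerivAt h1
  rw [h2.fderiv]
  simp

lemma Sm.refl {ρ : XX N → ℝ} (hρ : Sm ρ) (p : XX N) : Sm (fun z => ρ (p - z)) :=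
  ContDiff.comp (g := ρ) hρ (contDiff_const.sub contDiff_id)

lemma LS_refl {ρ : XX N → ℝ} (hρ : Sm ρ) (p z : XX N) :
    LS (fun z => ρ (p - z)) z = LL ρ (p - z) := by
  have h2 : ∀ v, DD v (DD v (fun z => ρ (p - z))) z = DD v (DD v ρ) (p - z) := by
    intro v
    rw [DD_refl hρ]
    have : (fun z => - DD v ρ (p - z)) = fun z => (fun _ => (-1:ℝ)) z * DD v ρ (p - z) := by
      funext z; ring
    rw [this, DD_mul (Sm.const _) ((hρ.DD v).refl p), DD_refl (hρ.DD v)]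
    simp [DD]
  unfold LS LL
  simp_rw [h2, DD_refl hρ]
  ring

end BU

namespace BU
variable {N : ℕ}

lemma IsLocalMax_line {f : XX N → ℝ} {h : XX N} (hm : IsLocalMax f h) (v : XX N) :
    IsLocalMax (fun s : ℝ => f (h + s • v)) 0 := by
  have ht : Tendsto (fun s : ℝ => h + s • v) (𝓝 0) (𝓝 h) := by
    have : Continuous (fun s : ℝ => h + s • v) := by fun_prop
    simpa using this.tendsto 0
  have := ht.eventually hm
  filter_upwards [this] with s hs
  simpa using hs

/-- squared Euclidean norm on space-time -/
def NN (h : XX N) : ℝ := h.1 ^ 2 + ‖h.2‖ ^ 2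

lemma NN_cont : Continuous (NN : XX N → ℝ) := by unfold NN; fun_prop

lemma NN_ge (h : XX N) : ‖h‖ ^ 2 ≤ NN h := by
  unfold NN
  rw [Prod.norm_def]
  rcases max_cases ‖h.1‖ ‖h.2‖ with ⟨e, _⟩ | ⟨e, _⟩ <;> rw [e]
  · rw [Real.norm_eq_abs, sq_abs]; nlinarith [sq_nonneg ‖h.2‖]
  · nlinarith [sq_nonneg h.1]

lemma NN_t (h : XX N) : HasDerivAt (fun s : ℝ => NN (h + s • et)) (2 * h.1) 0 := by
  have e : (fun s : ℝ => NN (h + s • et)) = fun s : ℝ => (h.1 + s) ^ 2 + ‖h.2‖ ^ 2 := by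
    funext s; simp [NN, et]
  rw [e]
  have := (((hasDerivAt_id (0:ℝ)).const_add h.1).pow 2).add_const (‖h.2‖ ^ 2)
  simpa using this

lemma NN_x (h : XX N) (i : Fin N) : Has2 (fun s : ℝ => NN (h + s • ei i)) 2 := by
  have e : (fun s : ℝ => NN (h + s • ei i)) = fun s : ℝ =>
      NN h + (2 * inner ℝ h.2 (EuclideanSpace.single i (1:ℝ))) * s + s ^ 2 := by
    funext s
    simp only [NN, ei, Prod.fst_add, Prod.smul_fst, Prod.snd_add, Prod.smul_snd]
    rw [norm_add_sq_real, norm_smul, inner_smul_right]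
    simp
    ring
  rw [e]
  set b := 2 * inner ℝ h.2 (EuclideanSpace.single i (1:ℝ))
  refine ⟨fun s => b + 2 * s, Eventually.of_forall fun s => ?_, ?_⟩
  · have := (((hasDerivAt_id s).const_mul b).const_add (NN h)).add ((hasDerivAt_id s).pow 2)
    simpa using! this
  · have := ((hasDerivAt_id (0:ℝ)).const_mul 2).const_add b
    simpa using! this

lemma lemD_one {V : XX N → ℝ} {O : Set (XX N)} {C : ℝ} {ρ : XX N → ℝ} (hV : Continuous V)
    (hO : IsOpen O) (hPW : ∀ p ∈ O, PW V C p) (hC : 0 ≤ C) (hρ : Sm ρ)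
    (hc : HasCompactSupport ρ) (h0 : ∀ p, 0 ≤ ρ p) (p0 : XX N)
    (hsub : ∀ z ∈ tsupport ρ, p0 - z ∈ O) :
    -(C * Cv ρ (fun p => |V p|) p0) ≤ LL (Cv ρ V) p0 := by
  set W := Cv ρ V with hW
  have hWs : Sm W := hρ.Cv hc hV
  set I := ∫ z, ρ z with hI
  have I0 : 0 ≤ I := integral_nonneg h0
  have hK : IsCompact (tsupport ρ) := hc
  set K' := (fun z => p0 - z) '' tsupport ρ with hK'
  have K'c : IsCompact K' := hK.image (by fun_prop)
  obtain ⟨r0, r0p, hr0⟩ := K'c.exists_cthickening_subset_open hO (by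
    rintro _ ⟨z, hz, rfl⟩; exact hsub z hz)
  have Mc : IsCompact (cthickening 1 K') := K'c.cthickening
  have memM : ∀ z ∈ tsupport ρ, ∀ h : XX N, ∀ r, ‖h‖ ≤ r → p0 + h - z ∈ cthickening r K' := by
    intro z hz h r hr
    apply mem_cthickening_of_dist_le (p0 + h - z) (p0 - z) r K' ⟨z, hz, rfl⟩
    rw [dist_eq_norm]
    have : p0 + h - z - (p0 - z) = h := by abel
    rw [this]; exact hr
  have huc := Mc.uniformContinuousOn_of_continuous hV.continuousOn
  rw [Metric.uniformContinuousOn_iff] at huc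
  have main : ∀ η > 0, -(C * Cv ρ (fun p => |V p|) p0) - η * (3 + 2 * C * I + 2 * N) ≤ LL W p0 := by
    intro η hη
    obtain ⟨γ1, γ1p, hγ1⟩ := huc η hη
    obtain ⟨r1, r1p, hr1⟩ := Metric.continuous_iff.1 hWs.LL.cont p0 η hη
    obtain ⟨r, rp, hrr0, hr1', hrγ, hrr1⟩ : ∃ r > 0, r ≤ r0 ∧ r ≤ 1 ∧ r < γ1 ∧ r < r1 := by
      refine ⟨min (min r0 1) (min (γ1/2) (r1/2)), by positivity, ?_, ?_, ?_, ?_⟩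
      · exact (min_le_left _ _).trans (min_le_left _ _)
      · exact (min_le_left _ _).trans (min_le_right _ _)
      · exact ((min_le_right _ _).trans (min_le_left _ _)).trans_lt (by linarith)
      · exact ((min_le_right _ _).trans (min_le_right _ _)).trans_lt (by linarith)
    set δ := min η (η * r ^ 2 / (4 * (I + 1))) with hδ
    have δp : 0 < δ := by rw [hδ]; positivity
    have δη : δ ≤ η := min_le_left _ _
    have hE : 2 * (δ * I) < η * r ^ 2 := by
      have h1 : δ ≤ η * r ^ 2 / (4 * (I + 1)) := min_le_right _ _
      rw [le_div_iff₀ (by positivity)] at h1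
      nlinarith [mul_pos hη (pow_pos rp 2)]
    obtain ⟨γ, γp, hγ⟩ := huc δ δp
    obtain ⟨s, c, hs, c0, hR⟩ := riem hρ.cont hc h0 γp
    have r1M : ∀ z ∈ tsupport ρ, ∀ h : XX N, ‖h‖ ≤ r → p0 + h - z ∈ cthickening 1 K' :=
      fun z hz h hh => memM z hz h 1 (hh.trans hr1')
    have hR1 : ∀ h : XX N, ‖h‖ ≤ r → |∑ y ∈ s, c y * V (p0 + h - y) - W (p0 + h)| ≤ δ * I := by
      intro h hh
      rw [hW, Cv_flip]
      refine hR (fun z => V (p0 + h - z)) δ (by fun_prop) fun y hy z hz hyz => ?_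
      have := hγ _ (r1M y hy h hh) _ (r1M z hz h hh) (by rw [dist_sub_left, dist_comm]; exact hyz)
      exact this.le
    have hR2 : ∀ h : XX N, ‖h‖ ≤ r →
        |∑ y ∈ s, c y * |V (p0 + h - y)| - ∫ z, |V (p0 + h - z)| * ρ z| ≤ δ * I := by
      intro h hh
      refine hR (fun z => |V (p0 + h - z)|) δ (by fun_prop) fun y hy z hz hyz => ?_
      have := hγ _ (r1M y hy h hh) _ (r1M z hz h hh) (by rw [dist_sub_left, dist_comm]; exact hyz)
      exact (abs_abs_sub_abs_le_abs_sub _ _).trans this.le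
    set f : XX N → ℝ := fun h => (∑ y ∈ s, c y * V (p0 + h - y)) + (-1) * W (p0 + h)
      + (-η) * NN h with hf
    have fc : Continuous f := by
      have := hWs.cont
      have := NN_cont (N := N)
      rw [hf]; fun_prop
    obtain ⟨h, hmem, hmax⟩ := (isCompact_closedBall (0 : XX N) r).exists_isMaxOn
      ⟨0, by simp [rp.le]⟩ fc.continuousOn
    have hle : ‖h‖ ≤ r := by simpa using hmem
    have hlt : ‖h‖ < r := by
      refine lt_of_le_of_ne hle fun heq => ?_
      have a1 : f 0 ≤ f h := hmax (by simp [rp.le])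
      have a2 := (abs_le.1 (hR1 h hle)).2
      have a3 := (abs_le.1 (hR1 0 (by simp [rp.le]))).1
      have a4 := NN_ge h
      rw [heq] at a4
      have a5 : NN (0 : XX N) = 0 := by simp [NN]
      simp only [hf] at a1
      rw [a5] at a1
      nlinarith
    have hloc : IsLocalMax f h := by
      have : closedBall (0 : XX N) r ∈ 𝓝 h :=
        Filter.mem_of_superset (isOpen_ball.mem_nhds (by simpa using hlt)) ball_subset_closedBall
      exact hmax.isLocalMax this
    have hOy : ∀ y ∈ s, p0 + h - y ∈ O := fun y hy =>
      hr0 (cthickening_mono hrr0 _ (memM y (hs y hy) h r hle))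
    have hD : ∀ y : XX N, ∃ d0 : ℝ, ∃ d : Fin N → ℝ, y ∈ s →
        HasDerivAt (fun s : ℝ => V (p0 + h - y + s • et)) d0 0 ∧
        (∀ i, Has2 (fun s => V (p0 + h - y + s • ei i)) (d i)) ∧
        |d0 + ∑ i, d i| ≤ C * |V (p0 + h - y)| := by
      intro y
      by_cases hy : y ∈ s
      · obtain ⟨d0, d, hh⟩ := hPW _ (hOy y hy)
        exact ⟨d0, d, fun _ => hh⟩
      · exact ⟨0, 0, fun h => absurd h hy⟩
    choose d0 d hd using hD
    have ef : ∀ v : XX N, (fun t : ℝ => f (h + t • v)) = fun t =>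
        (∑ y ∈ s, c y * V (p0 + h - y + t • v)) + (-1) * W (p0 + h + t • v)
      + (-η) * NN (h + t • v) := by
      intro v; funext t
      simp only [hf]
      have e1 : ∀ y, p0 + (h + t • v) - y = p0 + h - y + t • v := fun y => by abel
      simp_rw [e1, add_assoc]
    have T0 : (∑ y ∈ s, c y * d0 y) + (-1) * DD et W (p0 + h) + (-η) * (2 * h.1) = 0 := by
      have hm := IsLocalMax_line hloc et
      rw [ef] at hm
      refine hm.hasDerivAt_eq_zero ?_
      refine HasDerivAt.add (HasDerivAt.add ?_ ?_) ((NN_t h).const_mul _)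
      · exact HasDerivAt.fun_sum fun y hy => (hd y hy).1.const_mul _
      · have := (hasDerivAt_line hWs (p0 + h) et 0).const_mul (-1)
        simpa using this
    have T1 : ∀ i, (∑ y ∈ s, c y * d y i) + (-1) * DD (ei i) (DD (ei i) W) (p0 + h) + (-η) * 2 ≤ 0 := by
      intro i
      have hm := IsLocalMax_line hloc (ei i)
      rw [ef] at hm
      refine Has2.le_zero ?_ hm
      refine Has2.add (Has2.add ?_ ?_) ((NN_x h i).cmul _)
      · exact Has2.sum fun y hy => ((hd y hy).2.1 i).cmul _
      · exact (has2_of_sm hWs (p0 + h) (ei i)).cmul _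
    have T2 := Finset.sum_le_sum fun i (_ : i ∈ Finset.univ) => T1 i
    rw [Finset.sum_add_distrib, Finset.sum_add_distrib, Finset.sum_comm, ← Finset.mul_sum] at T2
    simp only [← Finset.mul_sum, Finset.sum_const, Finset.card_univ, Fintype.card_fin, nsmul_eq_mul,
      mul_zero] at T2
    have T3 : ∑ y ∈ s, c y * (-(C * |V (p0 + h - y)|)) ≤ ∑ y ∈ s, c y * (d0 y + ∑ i, d y i) :=
      Finset.sum_le_sum fun y hy => mul_le_mul_of_nonneg_left (abs_le.1 (hd y hy).2.2).1 (c0 y)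
    have T4 : ∑ y ∈ s, c y * (-(C * |V (p0 + h - y)|)) = -C * ∑ y ∈ s, c y * |V (p0 + h - y)| := by
      rw [Finset.mul_sum]; exact Finset.sum_congr rfl fun y _ => by ring
    simp_rw [mul_add, Finset.sum_add_distrib] at T3
    have T5 := (abs_le.1 (hR2 h hle)).2
    have T6 : ∫ z, |V (p0 + h - z)| * ρ z ≤ Cv ρ (fun p => |V p|) p0 + η * I := by
      rw [Cv_flip, hI, ← integral_const_mul, ← integral_add]
      · apply integral_mono
        · exact integ (by have := hρ.cont; fun_prop) hc.mul_left
        · exact ((HI.of (integ (g := fun z => |V (p0 - z)| * ρ z) (by have := hρ.cont; fun_prop)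
            hc.mul_left)).add ((HI.of (integ hρ.cont hc)).cmul η)).1
        · intro z
          simp only
          by_cases hz : z ∈ tsupport ρ
          · have h1 := hγ1 _ (r1M z hz h hle) _ (r1M z hz 0 (by simp [rp.le])) (by
              rw [dist_sub_right, dist_add_left, dist_zero_right]; exact hle.trans_lt hrγ)
            rw [add_zero] at h1
            have h2 : |V (p0 + h - z)| ≤ |V (p0 - z)| + η := by
              have := abs_sub_abs_le_abs_sub (V (p0 + h - z)) (V (p0 - z))
              rw [Real.dist_eq] at h1
              linarith
            nlinarith [h0 z]
          · simp [image_eq_zero_of_notMem_tsupport hz]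
      · exact integ (by have := hρ.cont; fun_prop) hc.mul_left
      · exact (integ hρ.cont hc).const_mul _
    have T7 := hr1 (p0 + h) (by rw [dist_self_add_left]; exact hle.trans_lt hrr1)
    rw [Real.dist_eq] at T7
    have T8 := (abs_lt.1 T7).2
    have T9 : |h.1| ≤ r := (norm_fst_le h).trans hle
    have T10 : LL W (p0 + h) = DD et W (p0 + h) + ∑ i, DD (ei i) (DD (ei i) W) (p0 + h) := rfl
    have T11 : C * ∑ y ∈ s, c y * |V (p0 + h - y)| ≤
        C * (Cv ρ (fun p => |V p|) p0 + η * I + η * I) := by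
      apply mul_le_mul_of_nonneg_left _ hC
      nlinarith
    have T12 : -η * (2 * h.1) ≥ - (2 * η) := by
      have := (abs_le.1 T9).2
      nlinarith
    have T13 := (abs_le.1 T9).1
    nlinarith
  by_contra hcon
  push Not at hcon
  set A := 3 + 2 * C * I + 2 * N with hA
  have Ap : 0 < A := by positivity
  have := main ((-(C * Cv ρ (fun p => |V p|) p0) - LL W p0) / (2 * A)) (by
    apply div_pos _ (by positivity); linarith)
  have e : (-(C * Cv ρ (fun p => |V p|) p0) - LL W p0) / (2 * A) * A =
    (-(C * Cv ρ (fun p => |V p|) p0) - LL W p0) / 2 := by field_simp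
  rw [e] at this
  linarith

end BU

namespace BU
variable {N : ℕ}

lemma lemD {V : XX N → ℝ} {O : Set (XX N)} {C : ℝ} {φ : XX N → ℝ} (hV : Continuous V)
    (hO : IsOpen O) (hPW : ∀ p ∈ O, PW V C p) (hC : 0 ≤ C) (hφ : Sm φ)
    (hc : HasCompactSupport φ) (h0 : ∀ p, 0 ≤ φ p)
    (hsub : tsupport φ ⊆ O) :
    |∫ p, V p * LS φ p| ≤ C * ∫ p, |V p| * φ p := by
  set ρ : XX N → ℝ := fun z => φ (0 - z) with hρdef
  have hρ : Sm ρ := hφ.refl 0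
  have hρc : HasCompactSupport ρ := hc.comp_homeomorph (Homeomorph.subLeft 0)
  have hs : ∀ z ∈ tsupport ρ, (0 : XX N) - z ∈ O := by
    intro z hz
    apply hsub
    have : tsupport ρ ⊆ (fun z => (0 : XX N) - z) ⁻¹' tsupport φ := by
      apply closure_minimal
      · intro z hz; exact subset_tsupport _ hz
      · exact (isClosed_tsupport φ).preimage (by fun_prop)
    exact this hz
  have hback : (fun z => ρ (0 - z)) = φ := by funext z; simp [hρdef]
  have e1 : ∀ V : XX N → ℝ, Continuous V → LL (Cv ρ V) 0 = ∫ p, V p * LS φ p := by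
    intro V hV
    rw [LL_Cv hρ hρc hV, Cv]
    congr 1; funext z
    rw [← LS_refl hρ, hback]
  have e2 : ∀ V : XX N → ℝ, Cv ρ V 0 = ∫ p, V p * φ p := by
    intro V; simp [Cv, hρdef]
  have a1 := lemD_one hV hO hPW hC hρ hρc (fun p => h0 _) 0 hs
  have hVn : Continuous (fun p => - V p) := hV.neg
  have a2 := lemD_one hVn hO (fun p hp => (hPW p hp).neg) hC hρ hρc (fun p => h0 _) 0 hs
  rw [e1 _ hV, e2] at a1
  rw [e1 _ hVn, e2] at a2
  simp only [abs_neg, neg_mul, integral_neg] at a2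
  rw [abs_le]
  constructor <;> linarith

lemma LS_mul {f g : XX N → ℝ} (hf : Sm f) (hg : Sm g) (hgx : ∀ i p, DD (ei i) g p = 0) (p : XX N) :
    LS (fun p => f p * g p) p = LS f p * g p - f p * DD et g p := by
  have h1 := LL_mul hf hg p
  have h2 : ∀ g : XX N → ℝ, LS g p = LL g p - 2 * DD et g p := by
    intro g; unfold LS LL; ring
  have h3 : LL g p = DD et g p := by
    unfold LL
    have : ∀ i, DD (ei i) g = fun _ => 0 := fun i => funext fun p => hgx i p
    simp_rw [this]
    simp [DD]
  rw [h2, h2, h1, DD_mul hf hg, h3]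
  simp only [hgx]
  simp; ring

/-- time cutoffs -/
def th (n : ℕ) (p : XX N) : ℝ := Real.smoothTransition ((n + 1) * p.1 - 1)

lemma th_sm (n : ℕ) : Sm (th n : XX N → ℝ) := by
  unfold th Sm
  exact Real.smoothTransition.contDiff.comp (by fun_prop)

lemma th_x (n : ℕ) (i : Fin N) (p : XX N) : DD (ei i) (th n) p = 0 := by
  have h := hasDerivAt_line (th_sm n) p (ei i) 0
  have e : (fun s : ℝ => th n (p + s • ei i)) = fun _ => th n p := by
    funext s; simp [th, ei]
  rw [e] at h
  have := h.unique (hasDerivAt_const _ _)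
  simpa using this

lemma th_t (n : ℕ) (p : XX N) : 0 ≤ DD et (th n) p := by
  have h := hasDerivAt_line (th_sm n) p et 0
  have m : Monotone (fun s : ℝ => th n (p + s • et)) := by
    intro a b hab
    unfold th
    apply Real.smoothTransition.monotone
    simp only [et, Prod.fst_add, Prod.smul_fst, smul_eq_mul, mul_one]
    nlinarith [(Nat.cast_nonneg n : (0:ℝ) ≤ n)]
  have : 0 ≤ deriv (fun s : ℝ => th n (p + s • et)) 0 := m.deriv_nonneg
  rw [h.deriv] at this
  simpa using this

lemma th_t_zero (n : ℕ) (p : XX N) (hp : 2 / ((n:ℝ) + 1) < p.1) : DD et (th n) p = 0 := by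
  have : th n =ᶠ[𝓝 p] fun _ => (1:ℝ) := by
    have : ∀ᶠ q : XX N in 𝓝 p, 2 / ((n:ℝ) + 1) < q.1 :=
      continuous_fst.continuousAt.eventually (lt_mem_nhds hp)
    filter_upwards [this] with q hq
    unfold th
    apply Real.smoothTransition.one_of_one_le
    rw [div_lt_iff₀ (by positivity)] at hq
    linarith
  rw [DD, this.fderiv_eq]; simp

lemma lemD' {V : XX N → ℝ} {O : Set (XX N)} {C : ℝ} {φ : XX N → ℝ} (hV : Continuous V)
    (hO : IsOpen O) (hPW : ∀ p ∈ O, 0 < p.1 → PW V C p) (hV0 : ∀ p : XX N, p.1 ≤ 0 → V p = 0)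
    (hC : 0 ≤ C) (hφ : Sm φ) (hc : HasCompactSupport φ) (h0 : ∀ p, 0 ≤ φ p)
    (hsub : tsupport φ ⊆ O) :
    |∫ p, V p * LS φ p| ≤ C * ∫ p, |V p| * φ p := by
  have hK : IsCompact (tsupport φ) := hc
  set J := ∫ p, |DD et φ p| with hJ
  have J0 : 0 ≤ J := integral_nonneg fun p => abs_nonneg _
  have iVφ : Integrable (fun p => |V p| * φ p) := integ (hV.abs.mul hφ.cont) hc.mul_left
  have iJ : Integrable (fun p => |DD et φ p|) :=
    (integ (hφ.DD et).cont (DD_cs hc et)).abs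
  have bound : ∀ ε > 0, ∀ᶠ n : ℕ in atTop,
      |∫ p, V p * LS φ p * th n p| ≤ C * (∫ p, |V p| * φ p) + ε * J := by
    intro ε hε
    have huc := (hK.cthickening (r := 1)).uniformContinuousOn_of_continuous hV.continuousOn
    rw [Metric.uniformContinuousOn_iff] at huc
    obtain ⟨γ, γp, hγ⟩ := huc ε hε
    have hlim : Tendsto (fun n : ℕ => 2 / ((n:ℝ) + 1)) atTop (𝓝 0) := by
      have := (tendsto_one_div_add_atTop_nhds_zero_nat (𝕜 := ℝ)).const_mul 2
      simpa [div_eq_mul_inv] using this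
    filter_upwards [hlim.eventually (gt_mem_nhds γp), hlim.eventually (gt_mem_nhds one_pos)]
      with n hn1 hn2
    have hs : Sm (fun p => φ p * th n p) := hφ.mul (th_sm n)
    have hsc : HasCompactSupport (fun p => φ p * th n p) := hc.mul_right
    have thn0 : ∀ p : XX N, 0 ≤ th n p := fun p => Real.smoothTransition.nonneg _
    have thn1 : ∀ p : XX N, th n p ≤ 1 := fun p => Real.smoothTransition.le_one _
    have hts : tsupport (fun p => φ p * th n p) ⊆ O ∩ {p | 0 < p.1} := by
      have h1 : tsupport (fun p => φ p * th n p) ⊆ tsupport φ := tsupport_mul_subset_left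
      have h2 : tsupport (fun p => φ p * th n p) ⊆ {p : XX N | 1 ≤ (n + 1) * p.1} := by
        apply closure_minimal
        · intro p hp
          by_contra hcon
          simp only [mem_ofPred_eq, not_le] at hcon
          apply hp
          simp only
          rw [th, Real.smoothTransition.zero_of_nonpos (by linarith), mul_zero]
        · exact isClosed_le continuous_const (by fun_prop)
      intro p hp
      refine ⟨hsub (h1 hp), ?_⟩
      have := h2 hp
      simp only [mem_ofPred_eq] at this ⊢
      by_contra hcon
      push Not at hcon
      nlinarith [(Nat.cast_nonneg n : (0:ℝ) ≤ n)]
    have D := lemD hV (hO.inter (isOpen_lt continuous_const continuous_fst))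
      (fun p hp => hPW p hp.1 hp.2) hC hs hsc (fun p => mul_nonneg (h0 p) (thn0 p)) hts
    have i1 : Integrable (fun p => V p * LS φ p * th n p) :=
      integ ((hV.mul hφ.LS.cont).mul (th_sm n).cont) (HasCompactSupport.mul_right (LS_cs hc).mul_left)
    have i2 : Integrable (fun p => V p * φ p * DD et (th n) p) :=
      integ ((hV.mul hφ.cont).mul ((th_sm n).DD et).cont) (HasCompactSupport.mul_right hc.mul_left)
    have e1 : ∫ p, V p * LS (fun p => φ p * th n p) p
        = (∫ p, V p * LS φ p * th n p) - ∫ p, V p * φ p * DD et (th n) p := by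
      rw [← integral_sub i1 i2]
      congr 1; funext p
      rw [LS_mul hφ (th_sm n) (th_x n)]; ring
    rw [e1] at D
    have b1 : ∫ p, |V p| * (φ p * th n p) ≤ ∫ p, |V p| * φ p := by
      apply integral_mono _ iVφ
      · intro p
        have := h0 p
        exact mul_le_mul_of_nonneg_left (by nlinarith [thn1 p]) (abs_nonneg _)
      · exact integ (hV.abs.mul hs.cont) hsc.mul_left
    have i3 : Integrable (fun p => φ p * DD et (th n) p) :=
      integ (hφ.cont.mul ((th_sm n).DD et).cont) hc.mul_right
    have i4 : Integrable (fun p => -(DD et φ p * th n p)) :=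
      (integ (g := fun p => DD et φ p * th n p) ((hφ.DD et).cont.mul (th_sm n).cont)
        (DD_cs hc _).mul_right).neg
    have b2 : ∫ p, φ p * DD et (th n) p ≤ J := by
      have : ∫ p, φ p * DD et (th n) p = ∫ p, -(DD et φ p * th n p) := by
        apply int_eq_of_DD (c := 1) (v := et) (F := fun p => φ p * th n p) i3 i4 hs hsc
        intro p; rw [DD_mul hφ (th_sm n)]; ring
      rw [this]
      apply integral_mono i4 iJ
      intro p
      simp only
      rw [← neg_mul]
      calc -DD et φ p * th n p ≤ |DD et φ p| * th n p :=
            mul_le_mul_of_nonneg_right (neg_le_abs _) (thn0 p)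
        _ ≤ |DD et φ p| := by nlinarith [abs_nonneg (DD et φ p), thn1 p]
    have b3 : |∫ p, V p * φ p * DD et (th n) p| ≤ ε * J := by
      refine le_trans ?_ (mul_le_mul_of_nonneg_left b2 hε.le)
      rw [← integral_const_mul, ← Real.norm_eq_abs]
      refine norm_integral_le_of_norm_le (i3.const_mul ε) (Eventually.of_forall fun p => ?_)
      rw [Real.norm_eq_abs, mul_assoc, abs_mul,
        abs_of_nonneg (mul_nonneg (h0 p) (th_t n p))]
      by_cases h1 : p.1 ≤ 0
      · rw [hV0 p h1]; simp; exact mul_nonneg hε.le (mul_nonneg (h0 p) (th_t n p))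
      by_cases h2 : 2 / ((n:ℝ) + 1) < p.1
      · simp [th_t_zero n p h2]
      by_cases h3 : p ∈ tsupport φ
      · push Not at h1 h2
        have hd : dist ((0, p.2) : XX N) p = p.1 := by
          rw [Prod.dist_eq]; simp [abs_of_pos h1, h1.le]
        have := hγ p (self_subset_cthickening _ h3) (0, p.2)
          (mem_cthickening_of_dist_le _ p 1 _ h3 (by rw [hd]; linarith))
          (by rw [dist_comm, hd]; linarith)
        rw [hV0 (0, p.2) le_rfl, Real.dist_eq, sub_zero] at this
        exact mul_le_mul_of_nonneg_right this.le (mul_nonneg (h0 p) (th_t n p))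
      · simp [image_eq_zero_of_notMem_tsupport h3]
    have b4 := mul_le_mul_of_nonneg_left b1 hC
    have b5 := abs_sub_abs_le_abs_sub (∫ p, V p * LS φ p * th n p) (∫ p, V p * φ p * DD et (th n) p)
    linarith
  have lim : Tendsto (fun n : ℕ => ∫ p, V p * LS φ p * th n p) atTop (𝓝 (∫ p, V p * LS φ p)) := by
    have ib : Integrable (fun p => |V p * LS φ p|) :=
      (integ (g := fun p => V p * LS φ p) (hV.mul hφ.LS.cont) (LS_cs hc).mul_left).abs
    refine tendsto_integral_of_dominated_convergence (fun p => |V p * LS φ p|) ?_ ib ?_ ?_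
    · intro n
      exact ((hV.mul hφ.LS.cont).mul (th_sm n).cont).aestronglyMeasurable
    · intro n
      refine Eventually.of_forall fun p => ?_
      have hth0 : 0 ≤ th n p := Real.smoothTransition.nonneg _
      rw [norm_mul, Real.norm_eq_abs, Real.norm_eq_abs, abs_of_nonneg hth0]
      have : th n p ≤ 1 := Real.smoothTransition.le_one _
      nlinarith [abs_nonneg (V p * LS φ p)]
    · refine Eventually.of_forall fun p => ?_
      by_cases h1 : p.1 ≤ 0
      · simp [hV0 p h1]
      · push Not at h1
        apply tendsto_const_nhds.congr'
        obtain ⟨m, hm⟩ := exists_nat_gt (2 / p.1)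
        filter_upwards [eventually_ge_atTop m] with n hn
        have : th n p = 1 := by
          unfold th
          apply Real.smoothTransition.one_of_one_le
          rw [div_lt_iff₀ h1] at hm
          have : (m:ℝ) ≤ n := by exact_mod_cast hn
          nlinarith
        rw [this, mul_one]
  have fin : ∀ ε > 0, |∫ p, V p * LS φ p| ≤ C * (∫ p, |V p| * φ p) + ε * J := fun ε hε =>
    le_of_tendsto lim.abs (bound ε hε)
  have : ∀ ε > 0, |∫ p, V p * LS φ p| ≤ C * (∫ p, |V p| * φ p) + ε := by
    intro ε hε
    have := fin (ε / (J + 1)) (by positivity)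
    have h2 : ε / (J + 1) * J ≤ ε := by
      rw [div_mul_eq_mul_div, div_le_iff₀ (by positivity)]; nlinarith
    linarith
  exact le_of_forall_pos_le_add this

end BU

namespace BU
variable {N : ℕ}

def bmp (N : ℕ) (n : ℕ) : ContDiffBump (0 : XX N) where
  rIn := 1 / (2 * (n + 1))
  rOut := 1 / (n + 1)
  rIn_pos := by positivity
  rIn_lt_rOut := by
    apply one_div_lt_one_div_of_lt (by positivity)
    nlinarith [(Nat.cast_nonneg n : (0:ℝ) ≤ n)]

/-- mollifiers -/
def rh (n : ℕ) : XX N → ℝ := (bmp N n).normed volume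

lemma rh_sm (n : ℕ) : Sm (rh n : XX N → ℝ) := (bmp N n).contDiff_normed
lemma rh_cs (n : ℕ) : HasCompactSupport (rh n : XX N → ℝ) := (bmp N n).hasCompactSupport_normed
lemma rh_nonneg (n : ℕ) (p : XX N) : 0 ≤ rh n p := (bmp N n).nonneg_normed p
lemma rh_int (n : ℕ) : ∫ p : XX N, rh n p = 1 := (bmp N n).integral_normed
lemma rh_zero (n : ℕ) (p : XX N) (h : 1 / ((n:ℝ) + 1) ≤ ‖p‖) : rh n p = 0 := by
  by_contra hc
  have : p ∈ Function.support (rh n : XX N → ℝ) := hc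
  rw [rh, (bmp N n).support_normed_eq] at this
  rw [mem_ball_zero_iff] at this
  have e : (bmp N n).rOut = 1 / ((n:ℝ) + 1) := rfl
  linarith

lemma rh_tendsto {V : XX N → ℝ} (hV : Continuous V) (p : XX N) :
    Tendsto (fun n => Cv (rh n) V p) atTop (𝓝 (V p)) := by
  have := ContDiffBump.convolution_tendsto_right_of_continuous (μ := (volume : Measure (XX N)))
    (φ := fun n => bmp N n) (l := atTop) (g := V)
    (tendsto_one_div_add_atTop_nhds_zero_nat (𝕜 := ℝ)) hV p
  refine this.congr fun n => ?_
  rw [Cv_flip, convolution_def]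
  congr 1; funext z
  simp [rh, mul_comm]

lemma Cv_le {V : XX N → ℝ} (hV : Continuous V) (n : ℕ) (p : XX N) {M : ℝ}
    (hM : ∀ q, dist q p ≤ 1 → |V q| ≤ M) : |Cv (rh n) V p| ≤ M := by
  rw [Cv_flip, ← Real.norm_eq_abs]
  have h1 : ‖∫ z, V (p - z) * rh n z‖ ≤ ∫ z : XX N, M * rh n z := by
    refine norm_integral_le_of_norm_le ((integ (rh_sm n).cont (rh_cs n)).const_mul M)
      (Eventually.of_forall fun z => ?_)
    rw [norm_mul, Real.norm_eq_abs, Real.norm_eq_abs, abs_of_nonneg (rh_nonneg n z)]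
    by_cases hz : 1 / ((n:ℝ) + 1) ≤ ‖z‖
    · simp [rh_zero n z hz]
    · apply mul_le_mul_of_nonneg_right _ (rh_nonneg n z)
      apply hM
      rw [dist_self_sub_left]
      push Not at hz
      refine hz.le.trans ?_
      rw [div_le_one (by positivity)]
      linarith [(Nat.cast_nonneg n : (0:ℝ) ≤ n)]
  rw [integral_const_mul, rh_int, mul_one] at h1
  exact h1

lemma conv_lim {V G : XX N → ℝ} (hV : Continuous V) (hG : Continuous G) (hGc : HasCompactSupport G) :
    Tendsto (fun n => ∫ p, G p * Cv (rh n) V p ^ 2) atTop (𝓝 (∫ p, G p * V p ^ 2)) := by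
  have hK : IsCompact (cthickening 1 (tsupport G)) := IsCompact.cthickening hGc
  obtain ⟨M, hM⟩ := hK.exists_bound_of_continuousOn hV.continuousOn
  refine tendsto_integral_of_dominated_convergence (fun p => |G p| * M ^ 2) ?_ ?_ ?_ ?_
  · intro n
    exact (hG.mul (((rh_sm n).Cv (rh_cs n) hV).cont.pow 2)).aestronglyMeasurable
  · exact (integ hG hGc).abs.mul_const _
  · intro n
    refine Eventually.of_forall fun p => ?_
    rw [norm_mul, Real.norm_eq_abs, Real.norm_eq_abs, abs_pow]
    by_cases hp : p ∈ tsupport G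
    · apply mul_le_mul_of_nonneg_left _ (abs_nonneg _)
      have := Cv_le hV n p (M := M) fun q hq => hM q (mem_cthickening_of_dist_le q p 1 _ hp hq)
      exact pow_le_pow_left₀ (abs_nonneg _) this 2
    · simp [image_eq_zero_of_notMem_tsupport hp]
  · refine Eventually.of_forall fun p => ?_
    exact ((rh_tendsto hV p).pow 2).const_mul _

lemma weighted_V {φ k V χ ψ : XX N → ℝ} {O : Set (XX N)} {C Pc : ℝ} (hφ : Sm φ) (hk : Sm k)
    (hV : Continuous V)
    (hO : IsOpen O) (hPW : ∀ p ∈ O, 0 < p.1 → PW V C p) (hV0 : ∀ p : XX N, p.1 ≤ 0 → V p = 0)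
    (hχ : Sm χ) (hχc : HasCompactSupport χ) (hχO : tsupport χ ⊆ O)
    (hψ : Sm ψ) (hψc : HasCompactSupport ψ) (hψO : tsupport ψ ⊆ O)
    (hDk : ∀ i p, DD (ei i) k p = 0)
    (hDP : ∀ i j p, DD (ei i) (DD (ei j) φ) p = if i = j then -2 * k p else 0)
    (hC : 0 ≤ C) (hPc : 0 ≤ Pc) (hψ0 : ∀ p, 0 ≤ ψ p)
    (hψχ : ∀ p, (∑ i, DD (ei i) χ p ^ 2) * Real.exp (φ p) ^ 2 ≤ Pc * ψ p) :
    ∫ p, Zf φ k p * (Real.exp (φ p) * χ p) ^ 2 * V p ^ 2 ≤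
      ∫ p, (3 * C ^ 2 * (Real.exp (φ p) * χ p) ^ 2 + 3 * (Real.exp (φ p) * LL χ p) ^ 2
        + 12 * Pc * (1/2 * |LS ψ p| + C * ψ p)) * V p ^ 2 := by
  have hE := hφ.exp
  have sqc : ∀ g : XX N → ℝ, HasCompactSupport g → HasCompactSupport (fun p => g p ^ 2) := by
    intro g hg; simp_rw [pow_two]; exact hg.mul_left
  have hVa : Continuous (fun p => |V p|) := hV.abs
  have k1 : Continuous (fun p => (Real.exp (φ p) * χ p) ^ 2) := (hE.cont.mul hχ.cont).pow 2
  have k2 : HasCompactSupport (fun p => Real.exp (φ p) * χ p) := hχc.mul_left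
  have k3 := sqc _ k2
  have k4 : HasCompactSupport (fun p => Zf φ k p * (Real.exp (φ p) * χ p) ^ 2) :=
    HasCompactSupport.mul_left (f := Zf φ k) k3
  have k5 : Continuous (fun p => Zf φ k p * (Real.exp (φ p) * χ p) ^ 2) := (Zf_cont hφ hk).mul k1
  have L1 := conv_lim hV k5 k4
  have L2 := conv_lim hVa (G := fun p => 3 * C ^ 2 * (Real.exp (φ p) * χ p) ^ 2
      + 3 * (Real.exp (φ p) * LL χ p) ^ 2 + 12 * Pc * (1/2 * |LS ψ p| + C * ψ p)) (by
        have := hE.cont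
        have := hχ.cont
        have := hχ.LL.cont
        have := hψ.LS.cont
        have := hψ.cont
        fun_prop) (by
      refine HasCompactSupport.add (HasCompactSupport.add
        (HasCompactSupport.mul_left k3)
        (HasCompactSupport.mul_left (sqc _ (LL_cs hχc).mul_left)))
        (HasCompactSupport.mul_left (HasCompactSupport.add (HasCompactSupport.mul_left ?_)
        (HasCompactSupport.mul_left hψc)))
      exact (LS_cs hψc).comp_left (g := fun x => |x|) (by simp))
  simp only [sq_abs] at L2
  refine le_of_tendsto_of_tendsto L1 L2 ?_
  have hK : IsCompact (tsupport χ ∪ tsupport ψ) := IsCompact.union hχc hψc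
  obtain ⟨r, rp, hr⟩ := hK.exists_cthickening_subset_open hO (union_subset hχO hψO)
  filter_upwards [(tendsto_one_div_add_atTop_nhds_zero_nat (𝕜 := ℝ)).eventually (gt_mem_nhds rp)]
    with n hn
  refine weighted hφ hk ((rh_sm n).Cv (rh_cs n) hV) hχ hχc hψ hψc hDk hDP hC hPc hψ0 hψχ
    ((rh_sm n).Cv (rh_cs n) hVa).cont ?_ ?_
  · intro p
    unfold Cv
    rw [← Real.norm_eq_abs]
    refine norm_integral_le_of_norm_le (Cv_int (rh_sm n).cont (rh_cs n) hVa p)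
      (Eventually.of_forall fun z => ?_)
    rw [norm_mul, Real.norm_eq_abs, Real.norm_eq_abs, abs_of_nonneg (rh_nonneg n _)]
  · intro p hp
    have hpK : p ∈ tsupport χ ∪ tsupport ψ := by
      rcases hp with h | h
      · exact Or.inl (subset_tsupport _ h)
      · exact Or.inr (subset_tsupport _ h)
    have e1 : LL (Cv (rh n) V) p = ∫ z, V z * LS (fun z => rh n (p - z)) z := by
      rw [LL_Cv (rh_sm n) (rh_cs n) hV, Cv]
      simp_rw [LS_refl (rh_sm n)]
    rw [e1]
    refine lemD' hV hO hPW hV0 hC ((rh_sm n).refl p)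
      ((rh_cs n).comp_homeomorph (Homeomorph.subLeft p)) (fun z => rh_nonneg n _) ?_
    refine Subset.trans ?_ hr
    have hcl : tsupport (fun z => rh n (p - z)) ⊆ closedBall p (1 / ((n:ℝ) + 1)) := by
      apply closure_minimal _ isClosed_closedBall
      intro z hz
      rw [mem_closedBall, dist_eq_norm, norm_sub_rev]
      by_contra hcon
      push Not at hcon
      exact hz (rh_zero n _ hcon.le)
    intro z hz
    exact mem_cthickening_of_dist_le z p r _ hpK ((hcl hz).trans hn.le)

end BU

namespace BU
variable {N : ℕ}

lemma DD_of_line {g : XX N → ℝ} (hg : Sm g) {p v : XX N} {d : ℝ}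
    (h : HasDerivAt (fun s : ℝ => g (p + s • v)) d 0) : DD v g p = d := by
  have := hasDerivAt_line hg p v 0
  simp only [zero_smul, add_zero] at this
  exact this.unique h

/-- quadratic functions -/
def QQ (i0 : Fin N) (A B D : ℝ → ℝ) (p : XX N) : ℝ :=
  A p.1 * p.2 i0 + B p.1 * ‖p.2‖ ^ 2 + D p.1

lemma sm_coord (i : Fin N) : Sm (fun p : XX N => p.2 i) :=
  ContDiff.comp (g := fun x : EE N => x i) (EuclideanSpace.proj (𝕜 := ℝ) i).contDiff contDiff_snd

lemma sm_time {A : ℝ → ℝ} (hA : ContDiff ℝ (⊤ : ℕ∞) A) : Sm (fun p : XX N => A p.1) :=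
  ContDiff.comp (g := A) hA contDiff_fst

lemma sm_normsq : Sm (fun p : XX N => ‖p.2‖ ^ 2) := ContDiff.norm_sq ℝ contDiff_snd

lemma sm_QQ (i0 : Fin N) {A B D : ℝ → ℝ} (hA : ContDiff ℝ (⊤ : ℕ∞) A)
    (hB : ContDiff ℝ (⊤ : ℕ∞) B) (hD : ContDiff ℝ (⊤ : ℕ∞) D) : Sm (QQ i0 A B D) :=
  (((sm_time hA).mul (sm_coord i0)).add ((sm_time hB).mul sm_normsq)).add (sm_time hD)

lemma QQ_t (i0 : Fin N) {A B D A1 B1 D1 : ℝ → ℝ} (hA : ContDiff ℝ (⊤ : ℕ∞) A)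
    (hB : ContDiff ℝ (⊤ : ℕ∞) B) (hD : ContDiff ℝ (⊤ : ℕ∞) D)
    (hA1 : ∀ t, HasDerivAt A (A1 t) t) (hB1 : ∀ t, HasDerivAt B (B1 t) t)
    (hD1 : ∀ t, HasDerivAt D (D1 t) t) : DD et (QQ i0 A B D) = QQ i0 A1 B1 D1 := by
  funext p
  apply DD_of_line (sm_QQ i0 hA hB hD)
  have e : (fun s : ℝ => QQ i0 A B D (p + s • et)) = fun s =>
      A (p.1 + s) * p.2 i0 + B (p.1 + s) * ‖p.2‖ ^ 2 + D (p.1 + s) := by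
    funext s; simp [QQ, et]
  rw [e]
  have sh : ∀ {A A1 : ℝ → ℝ}, (∀ t, HasDerivAt A (A1 t) t) →
      HasDerivAt (fun s => A (p.1 + s)) (A1 p.1) 0 := by
    intro A A1 h
    have := (h (p.1 + 0)).comp_const_add p.1 0
    simpa using this
  exact (((sh hA1).mul_const _).add ((sh hB1).mul_const _)).add (sh hD1)

def dl (i j : Fin N) : ℝ := if i = j then 1 else 0

lemma coord_line (p : XX N) (i j : Fin N) (s : ℝ) :
    (p + s • (ei j : XX N)).2 i = p.2 i + s * dl i j := by
  simp [ei, dl]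

lemma time_line (p : XX N) (j : Fin N) (s : ℝ) : (p + s • (ei j : XX N)).1 = p.1 := by
  simp [ei]

lemma normsq_line (p : XX N) (j : Fin N) (s : ℝ) :
    ‖(p + s • (ei j : XX N)).2‖ ^ 2 = ‖p.2‖ ^ 2 + 2 * s * p.2 j + s ^ 2 := by
  simp only [ei, Prod.snd_add, Prod.smul_snd]
  rw [norm_add_sq_real, norm_smul, inner_smul_right, EuclideanSpace.inner_single_right]
  simp
  ring

lemma QQ_x (i0 : Fin N) {A B D : ℝ → ℝ} (hA : ContDiff ℝ (⊤ : ℕ∞) A)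
    (hB : ContDiff ℝ (⊤ : ℕ∞) B) (hD : ContDiff ℝ (⊤ : ℕ∞) D) (j : Fin N) :
    DD (ei j) (QQ i0 A B D) = fun p => A p.1 * dl i0 j + 2 * B p.1 * p.2 j := by
  funext p
  apply DD_of_line (sm_QQ i0 hA hB hD)
  have e : (fun s : ℝ => QQ i0 A B D (p + s • ei j)) = fun s =>
      QQ i0 A B D p + (A p.1 * dl i0 j + 2 * B p.1 * p.2 j) * s + B p.1 * s ^ 2 := by
    funext s; simp only [QQ, coord_line, time_line, normsq_line]; ring
  rw [e]
  have := (((hasDerivAt_id (0:ℝ)).const_mul (A p.1 * dl i0 j + 2 * B p.1 * p.2 j)).const_add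
    (QQ i0 A B D p)).add (((hasDerivAt_id (0:ℝ)).pow 2).const_mul (B p.1))
  simpa using! this

lemma QQ_xx (i0 : Fin N) {A B D : ℝ → ℝ} (hA : ContDiff ℝ (⊤ : ℕ∞) A)
    (hB : ContDiff ℝ (⊤ : ℕ∞) B) (hD : ContDiff ℝ (⊤ : ℕ∞) D) (i j : Fin N) (p : XX N) :
    DD (ei i) (DD (ei j) (QQ i0 A B D)) p = if i = j then 2 * B p.1 else 0 := by
  apply DD_of_line ((sm_QQ i0 hA hB hD).DD _)
  rw [QQ_x i0 hA hB hD]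
  simp only [coord_line, time_line]
  have := (((hasDerivAt_id (0:ℝ)).mul_const (dl j i)).const_add (p.2 j)).const_mul (2 * B p.1)
    |>.const_add (A p.1 * dl i0 j)
  have e : (if i = j then 2 * B p.1 else 0) = 2 * B p.1 * (1 * dl j i) := by
    unfold dl; by_cases h : i = j
    · simp [h]
    · simp [h, Ne.symm h]
  rw [e]
  simpa using! this

lemma sum_dl (i0 : Fin N) (f : Fin N → ℝ) : ∑ j, dl i0 j * f j = f i0 := by
  simp [dl]

lemma sum_sq (x : EE N) : ∑ j, x j * x j = ‖x‖ ^ 2 := by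
  rw [EuclideanSpace.norm_sq_eq]
  simp [pow_two]

lemma sum_prod (i0 : Fin N) (x : EE N) (a b c d : ℝ) :
    ∑ j, (a * dl i0 j + b * x j) * (c * dl i0 j + d * x j)
      = a * c + (a * d + b * c) * x i0 + b * d * ‖x‖ ^ 2 := by
  have e : ∀ j, (a * dl i0 j + b * x j) * (c * dl i0 j + d * x j)
      = a * c * (dl i0 j * dl i0 j) + (a * d + b * c) * (dl i0 j * x j) + b * d * (x j * x j) := by
    intro j; ring
  simp_rw [e]
  rw [Finset.sum_add_distrib, Finset.sum_add_distrib, ← Finset.mul_sum, ← Finset.mul_sum,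
    ← Finset.mul_sum, sum_dl, sum_dl, sum_sq]
  simp [dl]

/-- parameters -/
structure Par (N : ℕ) where
  T : ℝ
  c : ℝ
  B : ℝ
  i0 : Fin N
  hT : 0 < T
  hc : 0 < c
  hB : 0 < B
  hcT : 256 * c * T ≤ 1

variable (P : Par N)

def Par.G (t : ℝ) : ℝ := (P.T - t) ^ 2 * (t + 8 * P.T)
def Par.G1 (t : ℝ) : ℝ := -3 * (P.T - t) * (5 * P.T + t)
def Par.G2 (t : ℝ) : ℝ := 12 * P.T + 6 * t
def Par.k (t : ℝ) : ℝ := 4 * P.c - 64 * P.c ^ 2 * t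

lemma Par.G_sm : ContDiff ℝ (⊤ : ℕ∞) P.G := by unfold Par.G; fun_prop
lemma Par.G1_sm : ContDiff ℝ (⊤ : ℕ∞) P.G1 := by unfold Par.G1; fun_prop
lemma Par.k_sm : ContDiff ℝ (⊤ : ℕ∞) P.k := by unfold Par.k; fun_prop

lemma Par.G_d (t : ℝ) : HasDerivAt P.G (P.G1 t) t := by
  have := (((hasDerivAt_id t).const_sub P.T).pow 2).mul ((hasDerivAt_id t).add_const (8 * P.T))
  convert! this using 1
  simp [Par.G1]; ring
lemma Par.G1_d (t : ℝ) : HasDerivAt P.G1 (P.G2 t) t := by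
  have := (((hasDerivAt_id t).const_sub P.T).const_mul (-3)).mul ((hasDerivAt_id t).const_add (5 * P.T))
  convert! this using 1
  simp [Par.G2]; ring
lemma Par.k_d (t : ℝ) : HasDerivAt P.k (-(64 * P.c ^ 2)) t := by
  have := ((hasDerivAt_id t).const_mul (64 * P.c ^ 2)).const_sub (4 * P.c)
  convert! this using 1
  simp

/-- Carleman weight -/
def Par.ph (a : ℝ) : XX N → ℝ := QQ P.i0 (fun t => a * P.G t) (fun t => - P.k t) (fun _ => 0)
/-- level function -/
def Par.Th (a : ℝ) : XX N → ℝ :=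
  QQ P.i0 (fun t => P.G t / P.B) (fun _ => -(P.c / a / P.B)) (fun _ => 0)

lemma aG_sm (a : ℝ) : ContDiff ℝ (⊤ : ℕ∞) (fun t => a * P.G t) := contDiff_const.mul P.G_sm
lemma GB_sm : ContDiff ℝ (⊤ : ℕ∞) (fun t => P.G t / P.B) := P.G_sm.div_const _
lemma nk_sm : ContDiff ℝ (⊤ : ℕ∞) (fun t => - P.k t) := P.k_sm.neg

lemma Par.ph_sm (a : ℝ) : Sm (P.ph a) := sm_QQ _ (aG_sm P a) (nk_sm P) contDiff_const
lemma Par.Th_sm (a : ℝ) : Sm (P.Th a) := sm_QQ _ (GB_sm P) contDiff_const contDiff_const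

lemma Par.ph_t (a : ℝ) : DD et (P.ph a) =
    QQ P.i0 (fun t => a * P.G1 t) (fun _ => 64 * P.c ^ 2) (fun _ => 0) := by
  apply QQ_t _ (aG_sm P a) (nk_sm P) contDiff_const
  · intro t; exact (P.G_d t).const_mul a
  · intro t; simpa using! (P.k_d t).neg
  · intro t; exact hasDerivAt_const _ _

lemma Par.ph_x (a : ℝ) (j : Fin N) : DD (ei j) (P.ph a) =
    fun p => a * P.G p.1 * dl P.i0 j + 2 * (- P.k p.1) * p.2 j :=
  QQ_x _ (aG_sm P a) (nk_sm P) contDiff_const j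

lemma Par.ph_xx (a : ℝ) (i j : Fin N) (p : XX N) : DD (ei i) (DD (ei j) (P.ph a)) p =
    if i = j then -2 * P.k p.1 else 0 := by
  rw [Par.ph, QQ_xx _ (aG_sm P a) (nk_sm P) contDiff_const i j]
  by_cases h : i = j <;> simp [h]

lemma Par.Th_t (a : ℝ) : DD et (P.Th a) =
    QQ P.i0 (fun t => P.G1 t / P.B) (fun _ => 0) (fun _ => 0) := by
  apply QQ_t _ (GB_sm P) contDiff_const contDiff_const
  · intro t; exact (P.G_d t).div_const _
  · intro t; exact hasDerivAt_const _ _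
  · intro t; exact hasDerivAt_const _ _

lemma Par.Th_x (a : ℝ) (j : Fin N) : DD (ei j) (P.Th a) =
    fun p => P.G p.1 / P.B * dl P.i0 j + 2 * (-(P.c / a / P.B)) * p.2 j :=
  QQ_x _ (GB_sm P) contDiff_const contDiff_const j

lemma Par.Th_xx (a : ℝ) (j : Fin N) (p : XX N) : DD (ei j) (DD (ei j) (P.Th a)) p =
    2 * (-(P.c / a / P.B)) := by
  rw [Par.Th, QQ_xx _ (GB_sm P) contDiff_const contDiff_const j j]
  simp

lemma Par.qf_ph (a : ℝ) : qf (P.ph a) = QQ P.i0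
    (fun t => -4 * a * (P.k t * P.G t) - a * P.G1 t)
    (fun t => 4 * (P.k t * P.k t) - 64 * P.c ^ 2) (fun t => a ^ 2 * (P.G t * P.G t)) := by
  funext p
  unfold qf
  rw [P.ph_t]
  simp_rw [P.ph_x]
  rw [sum_prod]
  unfold QQ
  ring

lemma Par.Zf_ph (a : ℝ) (p : XX N) : Zf (P.ph a) (fun p => P.k p.1) p =
    4 * a ^ 2 * P.G p.1 * (- P.G1 p.1 - 4 * P.k p.1 * P.G p.1)
    + a * p.2 P.i0 * (P.G2 p.1 + 16 * P.k p.1 * P.G1 p.1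
      + (64 * P.k p.1 ^ 2 - 512 * P.c ^ 2) * P.G p.1)
    + P.k p.1 * (1536 * P.c ^ 2 - 64 * P.k p.1 ^ 2) * ‖p.2‖ ^ 2 - 16 * P.k p.1 ^ 2 := by
  unfold Zf
  have s1 : ContDiff ℝ (⊤ : ℕ∞) (fun t => -4 * a * (P.k t * P.G t) - a * P.G1 t) :=
    (contDiff_const.mul (P.k_sm.mul P.G_sm)).sub (contDiff_const.mul P.G1_sm)
  have s2 : ContDiff ℝ (⊤ : ℕ∞) (fun t => 4 * (P.k t * P.k t) - 64 * P.c ^ 2) :=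
    (contDiff_const.mul (P.k_sm.mul P.k_sm)).sub contDiff_const
  have s3 : ContDiff ℝ (⊤ : ℕ∞) (fun t => a ^ 2 * (P.G t * P.G t)) :=
    contDiff_const.mul (P.G_sm.mul P.G_sm)
  have ht : DD et (qf (P.ph a)) = QQ P.i0
      (fun t => -4 * a * (-(64 * P.c ^ 2) * P.G t + P.k t * P.G1 t) - a * P.G2 t)
      (fun t => 4 * (-(64 * P.c ^ 2) * P.k t + P.k t * -(64 * P.c ^ 2)))
      (fun t => a ^ 2 * (P.G1 t * P.G t + P.G t * P.G1 t)) := by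
    rw [P.qf_ph]
    apply QQ_t _ s1 s2 s3
    · intro t
      exact (((P.k_d t).mul (P.G_d t)).const_mul (-4 * a)).sub ((P.G1_d t).const_mul a)
    · intro t
      exact (((P.k_d t).mul (P.k_d t)).const_mul 4).sub_const _
    · intro t
      exact ((P.G_d t).mul (P.G_d t)).const_mul _
  rw [ht]
  have hx : ∀ j, DD (ei j) (qf (P.ph a)) = fun p =>
      (-4 * a * (P.k p.1 * P.G p.1) - a * P.G1 p.1) * dl P.i0 j
        + 2 * (4 * (P.k p.1 * P.k p.1) - 64 * P.c ^ 2) * p.2 j := by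
    intro j
    rw [P.qf_ph]
    exact QQ_x _ s1 s2 s3 j
  simp_rw [hx, P.ph_x]
  rw [sum_prod, P.qf_ph]
  unfold QQ
  ring

/-- positivity -/
lemma Par.Zf_lower (a : ℝ) (ha : 0 ≤ a) (p : XX N) (h0 : 0 ≤ p.1) (h1 : p.1 ≤ P.T)
    (hx : 0 ≤ p.2 P.i0) :
    7 * P.T * a * p.2 P.i0 - 256 * P.c ^ 2 ≤ Zf (P.ph a) (fun p => P.k p.1) p := by
  rw [P.Zf_ph]
  have hT := P.hT
  have hc := P.hc
  have hcT := P.hcT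
  generalize p.1 = t at *
  generalize p.2 P.i0 = x at *
  have hct : 256 * P.c * t ≤ 1 := le_trans (by nlinarith) hcT
  have k1 : P.k t ≤ 4 * P.c := by unfold Par.k; nlinarith [mul_nonneg (sq_nonneg P.c) h0]
  have k2 : 15 / 4 * P.c ≤ P.k t := by unfold Par.k; nlinarith
  have g0 : 0 ≤ P.G t := by unfold Par.G; positivity
  have Tt : 0 ≤ P.T - t := by linarith
  have a1 : 0 ≤ - P.G1 t - 4 * P.k t * P.G t := by
    have : - P.G1 t - 4 * P.k t * P.G t
        = (P.T - t) * (3 * (5 * P.T + t) - 4 * P.k t * ((P.T - t) * (t + 8 * P.T))) := by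
      unfold Par.G1 Par.G; ring
    rw [this]
    apply mul_nonneg Tt
    have b1 : (P.T - t) * (t + 8 * P.T) ≤ 8 * P.T ^ 2 := by nlinarith
    have b2 : P.k t * ((P.T - t) * (t + 8 * P.T)) ≤ 4 * P.c * (8 * P.T ^ 2) :=
      mul_le_mul k1 b1 (by positivity) (by positivity)
    nlinarith
  have a2 : 7 * P.T ≤ P.G2 t + 16 * P.k t * P.G1 t + (64 * P.k t ^ 2 - 512 * P.c ^ 2) * P.G t := by
    have b0 : 0 ≤ (64 * P.k t ^ 2 - 512 * P.c ^ 2) * P.G t := by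
      apply mul_nonneg _ g0
      nlinarith
    have b1 : (P.T - t) * (5 * P.T + t) ≤ 5 * P.T ^ 2 := by nlinarith
    have b2 : P.k t * ((P.T - t) * (5 * P.T + t)) ≤ 4 * P.c * (5 * P.T ^ 2) :=
      mul_le_mul k1 b1 (by positivity) (by positivity)
    have b3 : 16 * P.k t * P.G1 t = -48 * (P.k t * ((P.T - t) * (5 * P.T + t))) := by
      unfold Par.G1; ring
    rw [b3]
    have b4 : P.G2 t = 12 * P.T + 6 * t := rfl
    nlinarith
  have a3 : 0 ≤ P.k t * (1536 * P.c ^ 2 - 64 * P.k t ^ 2) * ‖p.2‖ ^ 2 := by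
    apply mul_nonneg (mul_nonneg (by linarith) _) (sq_nonneg _)
    nlinarith
  have a4 : P.k t ^ 2 ≤ 16 * P.c ^ 2 := by nlinarith
  have a5 : 0 ≤ 4 * a ^ 2 * P.G t * (- P.G1 t - 4 * P.k t * P.G t) := by positivity
  have a6 := mul_le_mul_of_nonneg_left a2 (mul_nonneg ha hx)
  nlinarith

end BU

namespace BU
variable {N : ℕ}

/-- smooth, vanishing below 3/4 -/
structure C0 (η : ℝ → ℝ) : Prop where
  sm : ContDiff ℝ (⊤ : ℕ∞) η
  z : ∀ x < 3 / 4, η x = 0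

/-- moreover vanishing above 9/4 -/
structure CS (η : ℝ → ℝ) : Prop extends C0 η where
  z2 : ∀ x, 9 / 4 < x → η x = 0

lemma C0.deriv {η : ℝ → ℝ} (h : C0 η) : C0 (deriv η) where
  sm := by
    have h1 := h.sm
    exact (contDiff_infty_iff_deriv.1 h1).2
  z x hx := by
    have : η =ᶠ[𝓝 x] fun _ => 0 := by
      filter_upwards [Iio_mem_nhds hx] with y hy using h.z y hy
    rw [this.deriv_eq]; simp

lemma CS.deriv {η : ℝ → ℝ} (h : CS η) : CS (deriv η) where
  toC0 := h.toC0.deriv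
  z2 x hx := by
    have : η =ᶠ[𝓝 x] fun _ => 0 := by
      filter_upwards [Ioi_mem_nhds hx] with y hy using h.z2 y hy
    rw [this.deriv_eq]; simp

lemma CS.bdd {η : ℝ → ℝ} (h : CS η) : ∃ M, 0 ≤ M ∧ ∀ x, |η x| ≤ M := by
  have hc : ContinuousOn (fun x => |η x|) (Icc (3/4) (9/4)) := h.sm.continuous.abs.continuousOn
  obtain ⟨M, hM⟩ := (isCompact_Icc.bddAbove_image hc)
  refine ⟨max M 0, le_max_right _ _, fun x => ?_⟩
  by_cases h1 : x < 3/4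
  · rw [h.z x h1]; simp
  by_cases h2 : 9/4 < x
  · rw [h.z2 x h2]; simp
  exact le_trans (hM ⟨x, ⟨by linarith, by linarith⟩, rfl⟩) (le_max_left _ _)

def e0 (x : ℝ) : ℝ := Real.smoothTransition (x - 1)
def e1 (x : ℝ) : ℝ := Real.smoothTransition (4 * x - 3) * Real.smoothTransition (9 - 4 * x)

lemma e0_C0 : C0 e0 where
  sm := Real.smoothTransition.contDiff.comp (contDiff_id.sub contDiff_const)
  z x hx := Real.smoothTransition.zero_of_nonpos (by linarith)

lemma e0_CS : CS (deriv e0) where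
  toC0 := e0_C0.deriv
  z2 x hx := by
    have : e0 =ᶠ[𝓝 x] fun _ => 1 := by
      filter_upwards [Ioi_mem_nhds hx] with y hy
      have : (9:ℝ)/4 < y := hy
      exact Real.smoothTransition.one_of_one_le (by linarith)
    rw [this.deriv_eq]; simp

lemma e1_CS : CS e1 where
  sm := (Real.smoothTransition.contDiff.comp ((contDiff_const.mul contDiff_id).sub contDiff_const)).mul
    (Real.smoothTransition.contDiff.comp (contDiff_const.sub (contDiff_const.mul contDiff_id)))
  z x hx := by
    unfold e1
    rw [Real.smoothTransition.zero_of_nonpos (by linarith)]; simp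
  z2 x hx := by
    unfold e1
    rw [Real.smoothTransition.zero_of_nonpos (x := 9 - 4 * x) (by linarith)]; simp

lemma e1_nonneg (x : ℝ) : 0 ≤ e1 x :=
  mul_nonneg (Real.smoothTransition.nonneg _) (Real.smoothTransition.nonneg _)
lemma e0_one {x : ℝ} (h : 2 ≤ x) : e0 x = 1 :=
  Real.smoothTransition.one_of_one_le (by linarith)
lemma e0_zero {x : ℝ} (h : x ≤ 1) : e0 x = 0 :=
  Real.smoothTransition.zero_of_nonpos (by linarith)
lemma e1_one {x : ℝ} (h : 1 ≤ x) (h2 : x ≤ 2) : e1 x = 1 := by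
  unfold e1
  rw [Real.smoothTransition.one_of_one_le (by linarith),
    Real.smoothTransition.one_of_one_le (by linarith)]; simp
lemma de0_zero {x : ℝ} (h : x < 1 ∨ 2 < x) : deriv e0 x = 0 := by
  rcases h with h | h
  · have : e0 =ᶠ[𝓝 x] fun _ => 0 := by
      filter_upwards [Iio_mem_nhds h] with y hy
      exact e0_zero (le_of_lt hy)
    rw [this.deriv_eq]; simp
  · have : e0 =ᶠ[𝓝 x] fun _ => 1 := by
      filter_upwards [Ioi_mem_nhds h] with y hy
      exact e0_one (le_of_lt hy)
    rw [this.deriv_eq]; simp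

variable (P : Par N)

open Classical in
def Par.cut (a : ℝ) (η : ℝ → ℝ) (p : XX N) : ℝ :=
  if p.1 ∈ Ioo (-8 * P.T) P.T then η (P.Th a p) else 0

lemma Par.G_T : P.G P.T = 0 := by simp [Par.G]
lemma Par.G_8T : P.G (-8 * P.T) = 0 := by simp [Par.G]

variable {P}

lemma Par.cut_dich {a : ℝ} (ha : 0 < a) (p : XX N) : (∀ᶠ q in 𝓝 p, q.1 ∈ Ioo (-8 * P.T) P.T) ∨
    (∀ᶠ q in 𝓝 p, q.1 ∉ Ioo (-8 * P.T) P.T ∨ P.Th a q < 3 / 4) := by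
  by_cases h : p.1 ∈ Ioo (-8 * P.T) P.T
  · left
    exact continuous_fst.continuousAt.eventually (isOpen_Ioo.mem_nhds h)
  right
  have key : P.G p.1 = 0 → P.Th a p < 3 / 4 := by
    intro h
    unfold Par.Th QQ
    beta_reduce
    rw [h]
    have := P.hc
    have := P.hB
    have : 0 ≤ P.c / a / P.B * ‖p.2‖ ^ 2 := by positivity
    simp; linarith
  have fin : P.Th a p < 3 / 4 → ∀ᶠ q in 𝓝 p, q.1 ∉ Ioo (-8 * P.T) P.T ∨ P.Th a q < 3 / 4 := by
    intro h
    filter_upwards [(P.Th_sm a).cont.continuousAt.eventually (Iio_mem_nhds h)] with q hq using Or.inr hq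
  rcases lt_trichotomy p.1 (-8 * P.T) with h1 | h1 | h1
  · filter_upwards [continuous_fst.continuousAt.eventually (Iio_mem_nhds h1)] with q hq
    left; intro h; exact absurd h.1 (not_lt.2 (le_of_lt hq))
  · exact fin (key (by rw [h1, P.G_8T]))
  rcases lt_trichotomy p.1 P.T with h2 | h2 | h2
  · exact absurd ⟨h1, h2⟩ h
  · exact fin (key (by rw [h2, P.G_T]))
  · filter_upwards [continuous_fst.continuousAt.eventually (Ioi_mem_nhds h2)] with q hq
    left; intro h; exact absurd h.2 (not_lt.2 (le_of_lt hq))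

lemma Par.cut_dich2 {a : ℝ} (ha : 0 < a) (p : XX N) :
    (∀ η, P.cut a η =ᶠ[𝓝 p] fun q => η (P.Th a q)) ∨
    (∀ η, C0 η → P.cut a η =ᶠ[𝓝 p] fun _ => 0) := by
  rcases P.cut_dich ha p with h | h
  · left; intro η
    filter_upwards [h] with q hq
    simp only [Par.cut]; rw [if_pos hq]
  · right; intro η hη
    filter_upwards [h] with q hq
    simp only [Par.cut]
    split_ifs with h1
    · exact hη.z _ (hq.resolve_left (not_not.2 h1))
    · rfl

lemma Par.cut_sm {a : ℝ} (ha : 0 < a) {η : ℝ → ℝ} (hη : C0 η) : Sm (P.cut a η) := by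
  unfold Sm
  rw [contDiff_iff_contDiffAt]
  intro p
  rcases P.cut_dich2 ha p with h | h
  · exact (hη.sm.comp (P.Th_sm a)).contDiffAt.congr_of_eventuallyEq (h η)
  · exact contDiffAt_const.congr_of_eventuallyEq (h η hη)

lemma Par.cut_DD {a : ℝ} (ha : 0 < a) {η : ℝ → ℝ} (hη : C0 η) (v : XX N) :
    DD v (P.cut a η) = fun p => P.cut a (deriv η) p * DD v (P.Th a) p := by
  funext p
  unfold DD
  rcases P.cut_dich2 ha p with h | h
  · rw [(h η).fderiv_eq, (h (deriv η)).self_of_nhds]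
    have hd : HasDerivAt η (deriv η (P.Th a p)) (P.Th a p) :=
      (hη.sm.differentiable (by simp) _).hasDerivAt
    have := hd.comp_hasFDerivAt p ((P.Th_sm a).diff p).hasFDerivAt
    have e := this.fderiv
    have e2 : fderiv ℝ (fun q => η (P.Th a q)) p = deriv η (P.Th a p) • fderiv ℝ (P.Th a) p := e
    rw [e2]; simp
  · rw [(h η hη).fderiv_eq, (h _ hη.deriv).self_of_nhds]
    simp

lemma Par.cut_DD2 {a : ℝ} (ha : 0 < a) {η : ℝ → ℝ} (hη : C0 η) (v p : XX N) :
    DD v (DD v (P.cut a η)) p = P.cut a (deriv (deriv η)) p * DD v (P.Th a) p ^ 2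
      + P.cut a (deriv η) p * DD v (DD v (P.Th a)) p := by
  rw [P.cut_DD ha hη, DD_mul (P.cut_sm ha hη.deriv) ((P.Th_sm a).DD v), P.cut_DD ha hη.deriv]
  ring

lemma Par.G_nonneg {t : ℝ} (h : -8 * P.T ≤ t) : 0 ≤ P.G t := by
  unfold Par.G; apply mul_nonneg (sq_nonneg _); linarith
lemma Par.G_le {t : ℝ} (h : -8 * P.T ≤ t) (h2 : t ≤ P.T) : P.G t ≤ 729 * P.T ^ 3 := by
  unfold Par.G
  have hT := P.hT
  have h3 : (P.T - t) ^ 2 ≤ 81 * P.T ^ 2 := by nlinarith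
  have h4 : t + 8 * P.T ≤ 9 * P.T := by linarith
  calc _ ≤ 81 * P.T ^ 2 * (9 * P.T) := mul_le_mul h3 h4 (by linarith) (by positivity)
    _ = _ := by ring

variable (P)
def Par.Rm : ℝ := 729 * P.T ^ 3 / P.c
def Par.box (a : ℝ) : Set (XX N) := Icc (-8 * P.T) P.T ×ˢ closedBall 0 (P.Rm * a)
def Par.KK (a : ℝ) : Set (XX N) := {p | p.1 ∈ Icc (-8 * P.T) P.T ∧ 3 / 4 ≤ P.Th a p}
variable {P}

lemma Par.box_compact (a : ℝ) : IsCompact (P.box a) := isCompact_Icc.prod (isCompact_closedBall _ _)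
lemma Par.KK_closed (a : ℝ) : IsClosed (P.KK a) :=
  (isClosed_Icc.preimage continuous_fst).inter (isClosed_le continuous_const (P.Th_sm a).cont)

lemma Par.Th_eq {a : ℝ} (p : XX N) :
    P.B * P.Th a p = P.G p.1 * p.2 P.i0 - P.c / a * ‖p.2‖ ^ 2 := by
  have := P.hB
  unfold Par.Th QQ; field_simp; ring

lemma Par.KK_box {a : ℝ} (ha : 0 < a) : P.KK a ⊆ P.box a := by
  rintro p ⟨h1, h2⟩
  refine ⟨h1, ?_⟩
  rw [mem_closedBall_zero_iff]
  have h3 := P.Th_eq (a := a) p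
  have hB := P.hB
  have hc := P.hc
  have h4 : 0 < P.B * P.Th a p := by apply mul_pos hB; linarith
  have h5 : P.G p.1 * p.2 P.i0 ≤ 729 * P.T ^ 3 * ‖p.2‖ := by
    have : p.2 P.i0 ≤ ‖p.2‖ := le_trans (le_abs_self _) (PiLp.norm_apply_le p.2 P.i0)
    calc _ ≤ P.G p.1 * ‖p.2‖ := mul_le_mul_of_nonneg_left this (P.G_nonneg h1.1)
      _ ≤ _ := mul_le_mul_of_nonneg_right (P.G_le h1.1 h1.2) (norm_nonneg _)
  have h6 : P.c / a * ‖p.2‖ ^ 2 ≤ 729 * P.T ^ 3 * ‖p.2‖ := by linarith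
  by_cases h0 : ‖p.2‖ = 0
  · rw [h0]; unfold Par.Rm; have := P.hT; positivity
  have h7 : 0 < ‖p.2‖ := lt_of_le_of_ne (norm_nonneg _) (Ne.symm h0)
  have h8 : P.c / a * ‖p.2‖ ≤ 729 * P.T ^ 3 := by
    by_contra hh; push Not at hh
    nlinarith
  unfold Par.Rm
  rw [div_mul_eq_mul_div, le_div_iff₀ hc]
  rw [div_mul_eq_mul_div, div_le_iff₀ ha] at h8
  linarith

lemma Par.KK_x {a : ℝ} (ha : 0 < a) {p : XX N} (h : p ∈ P.KK a) :
    0 < p.2 P.i0 ∧ p.1 < P.T ∧ P.B * P.Th a p ≤ 729 * P.T ^ 3 * p.2 P.i0 := by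
  obtain ⟨h1, h2⟩ := h
  have h3 := P.Th_eq (a := a) p
  have hB := P.hB
  have hc := P.hc
  have h4 : 0 < P.B * P.Th a p := by apply mul_pos hB; linarith
  have h5 : 0 ≤ P.c / a * ‖p.2‖ ^ 2 := by positivity
  have h6 : 0 < P.G p.1 * p.2 P.i0 := by linarith
  have h7 := P.G_nonneg h1.1
  have h8 : 0 < p.2 P.i0 := by
    by_contra hh; push Not at hh; nlinarith
  refine ⟨h8, lt_of_le_of_ne h1.2 ?_, ?_⟩
  · intro hh; rw [hh, P.G_T] at h6; simp at h6
  · have := mul_le_mul_of_nonneg_right (P.G_le h1.1 h1.2) h8.le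
    linarith

lemma Par.cut_ne {a : ℝ} {η : ℝ → ℝ} (hη : C0 η) {p : XX N} (h : P.cut a η p ≠ 0) : p ∈ P.KK a := by
  unfold Par.cut at h
  split_ifs at h with h1
  · refine ⟨⟨h1.1.le, h1.2.le⟩, ?_⟩
    by_contra hh; push Not at hh
    exact h (hη.z _ hh)
  · exact absurd rfl h

lemma Par.cut_ts {a : ℝ} {η : ℝ → ℝ} (hη : C0 η) : tsupport (P.cut a η) ⊆ P.KK a :=
  closure_minimal (fun _ hp => P.cut_ne hη hp) (P.KK_closed a)

lemma Par.cut_cs {a : ℝ} (ha : 0 < a) {η : ℝ → ℝ} (hη : C0 η) : HasCompactSupport (P.cut a η) :=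
  (P.box_compact a).of_isClosed_subset (isClosed_tsupport _) ((P.cut_ts hη).trans (P.KK_box ha))

end BU

namespace BU
variable {N : ℕ}
variable (P : Par N)

/-- polynomially bounded families on the boxes -/
def Par.PB (f : ℝ → XX N → ℝ) : Prop :=
  ∃ M : ℝ, 0 ≤ M ∧ ∃ n : ℕ, ∀ a, 1 ≤ a → ∀ p ∈ P.box a, |f a p| ≤ M * a ^ n

variable {P}

lemma PBc {f : ℝ → XX N → ℝ} {M : ℝ} (h : ∀ a, 1 ≤ a → ∀ p ∈ P.box a, |f a p| ≤ M) : P.PB f := by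
  refine ⟨|M|, abs_nonneg _, 0, fun a ha p hp => ?_⟩
  have := h a ha p hp
  have := le_abs_self M
  simp; linarith

lemma PB_const (c : ℝ) : P.PB (fun _ _ => c) := PBc (M := |c|) fun _ _ _ _ => le_rfl
lemma PB_a : P.PB (fun a _ => a) :=
  ⟨1, zero_le_one, 1, fun a ha p _ => by rw [abs_of_nonneg (by linarith)]; simp⟩
lemma PB_apow (n : ℕ) : P.PB (fun a _ => a ^ n) :=
  ⟨1, zero_le_one, n, fun a ha p _ => by rw [abs_of_nonneg (by positivity)]; simp⟩
lemma PB_cdiv (c : ℝ) : P.PB (fun a _ => c / a) := PBc (M := |c|) fun a ha _ _ => by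
  rw [abs_div]
  apply div_le_self (abs_nonneg _)
  exact le_trans ha (le_abs_self _)
lemma PB_t {A : ℝ → ℝ} (hA : Continuous A) : P.PB (fun _ p => A p.1) := by
  obtain ⟨M, hM⟩ := (isCompact_Icc (a := -8 * P.T) (b := P.T)).bddAbove_image hA.abs.continuousOn
  exact PBc (M := M) fun a _ p hp => hM ⟨p.1, hp.1, rfl⟩
lemma Par.Rm_nonneg : 0 ≤ P.Rm := by
  unfold Par.Rm; have := P.hT; have := P.hc; positivity
lemma PB_norm : P.PB (fun _ p => ‖p.2‖) :=
  ⟨P.Rm, P.Rm_nonneg, 1, fun a _ p hp => by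
    have := mem_closedBall_zero_iff.1 hp.2
    simpa using this⟩
lemma PB_mono {f g : ℝ → XX N → ℝ} (hg : P.PB g) (h : ∀ a, 1 ≤ a → ∀ p ∈ P.box a, |f a p| ≤ |g a p|) :
    P.PB f := by
  obtain ⟨M, hM, n, h1⟩ := hg
  exact ⟨M, hM, n, fun a ha p hp => (h a ha p hp).trans (h1 a ha p hp)⟩
lemma PB_x (i : Fin N) : P.PB (fun _ p => p.2 i) := PB_mono PB_norm fun _ _ p _ => by
  simpa using PiLp.norm_apply_le p.2 i
lemma Par.PB.mul {f g : ℝ → XX N → ℝ} (hf : P.PB f) (hg : P.PB g) :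
    P.PB (fun a p => f a p * g a p) := by
  obtain ⟨M, hM, n, h1⟩ := hf
  obtain ⟨M', hM', n', h2⟩ := hg
  refine ⟨M * M', by positivity, n + n', fun a ha p hp => ?_⟩
  rw [abs_mul, pow_add]
  calc _ ≤ (M * a ^ n) * (M' * a ^ n') :=
        mul_le_mul (h1 a ha p hp) (h2 a ha p hp) (abs_nonneg _) (by positivity)
    _ = _ := by ring
lemma Par.PB.add {f g : ℝ → XX N → ℝ} (hf : P.PB f) (hg : P.PB g) :
    P.PB (fun a p => f a p + g a p) := by
  obtain ⟨M, hM, n, h1⟩ := hf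
  obtain ⟨M', hM', n', h2⟩ := hg
  refine ⟨M + M', by positivity, n + n', fun a ha p hp => ?_⟩
  have e1 : a ^ n ≤ a ^ (n + n') := pow_le_pow_right₀ ha (by omega)
  have e2 : a ^ n' ≤ a ^ (n + n') := pow_le_pow_right₀ ha (by omega)
  calc _ ≤ |f a p| + |g a p| := abs_add_le _ _
    _ ≤ M * a ^ n + M' * a ^ n' := add_le_add (h1 a ha p hp) (h2 a ha p hp)
    _ ≤ M * a ^ (n + n') + M' * a ^ (n + n') := by gcongr
    _ = _ := by ring
lemma Par.PB.neg {f : ℝ → XX N → ℝ} (hf : P.PB f) : P.PB (fun a p => - f a p) :=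
  PB_mono hf fun a _ p _ => by simp
lemma Par.PB.abs {f : ℝ → XX N → ℝ} (hf : P.PB f) : P.PB (fun a p => |f a p|) :=
  PB_mono hf fun a _ p _ => by simp
lemma Par.PB.sq {f : ℝ → XX N → ℝ} (hf : P.PB f) : P.PB (fun a p => f a p ^ 2) := by
  simp_rw [pow_two]; exact hf.mul hf
lemma Par.PB.sum {f : Fin N → ℝ → XX N → ℝ} (hf : ∀ i, P.PB (f i)) :
    P.PB (fun a p => ∑ i, f i a p) := by
  classical
  have : ∀ s : Finset (Fin N), P.PB (fun a p => ∑ i ∈ s, f i a p) := by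
    intro s
    induction s using Finset.induction_on with
    | empty => simpa using PB_const 0
    | insert i s hi ih =>
      simp_rw [Finset.sum_insert hi]
      exact (hf i).add ih
  exact this _

lemma PB_cut {η : ℝ → ℝ} (h : CS η) : P.PB (fun a => P.cut a η) := by
  obtain ⟨M, hM, h1⟩ := h.bdd
  refine PBc (M := M) fun a _ p _ => ?_
  unfold Par.cut
  split_ifs
  · exact h1 _
  · simpa using hM

lemma PB_Th_t : P.PB (fun a => DD et (P.Th a)) := by
  simp_rw [P.Th_t]
  unfold QQ
  exact (((PB_t (P.G1_sm.continuous.div_const _)).mul (PB_x _)).add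
    ((PB_const 0).mul PB_norm.sq)).add (PB_const 0)
lemma PB_Th_x (j : Fin N) : P.PB (fun a => DD (ei j) (P.Th a)) := by
  simp_rw [P.Th_x]
  have h : P.PB (fun a _ => -(P.c / a / P.B)) := by
    have := ((PB_cdiv (P := P) P.c).mul (PB_const (P.B)⁻¹)).neg
    simpa [div_eq_mul_inv] using this
  exact ((PB_t (P.G_sm.continuous.div_const _)).mul (PB_const _)).add (((PB_const 2).mul h).mul (PB_x j))
lemma PB_Th_xx (j : Fin N) : P.PB (fun a => DD (ei j) (DD (ei j) (P.Th a))) := by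
  have e : (fun a => DD (ei j) (DD (ei j) (P.Th a))) = fun a _ => 2 * (-(P.c / a / P.B)) := by
    funext a p; rw [P.Th_xx]
  rw [e]
  have h : P.PB (fun a _ => -(P.c / a / P.B)) := by
    have := ((PB_cdiv (P := P) P.c).mul (PB_const (P.B)⁻¹)).neg
    simpa [div_eq_mul_inv] using this
  exact (PB_const 2).mul h
lemma PB_ph_t : P.PB (fun a => DD et (P.ph a)) := by
  simp_rw [P.ph_t]
  unfold QQ
  exact (((PB_a.mul (PB_t P.G1_sm.continuous)).mul (PB_x _)).add
    ((PB_const _).mul PB_norm.sq)).add (PB_const 0)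
lemma PB_ph_x (j : Fin N) : P.PB (fun a => DD (ei j) (P.ph a)) := by
  simp_rw [P.ph_x]
  exact ((PB_a.mul (PB_t P.G_sm.continuous)).mul (PB_const _)).add
    (((PB_const 2).mul (PB_t P.k_sm.continuous).neg).mul (PB_x j))
lemma PB_ph_xx (j : Fin N) : P.PB (fun a => DD (ei j) (DD (ei j) (P.ph a))) := by
  have e : (fun a => DD (ei j) (DD (ei j) (P.ph a))) = fun a p => -2 * P.k p.1 := by
    funext a p; rw [P.ph_xx]; simp
  rw [e]
  exact (PB_const _).mul (PB_t P.k_sm.continuous)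

/-- the function e^{2φ} g -/
lemma LS_exp {f g : XX N → ℝ} (hf : Sm f) (hg : Sm g) (p : XX N) :
    LS (fun p => Real.exp (f p) * (Real.exp (f p) * g p)) p = Real.exp (f p) ^ 2 *
      ((-2 * DD et f p + ∑ i, (2 * DD (ei i) (DD (ei i) f) p + 4 * DD (ei i) f p ^ 2)) * g p
        + (-DD et g p + ∑ i, (DD (ei i) (DD (ei i) g) p + 4 * (DD (ei i) f p * DD (ei i) g p)))) := by
  have he := hf.exp
  have h1 : ∀ v, DD v (fun p => Real.exp (f p)) = fun p => DD v f p * Real.exp (f p) :=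
    fun v => funext fun p => DD_exp hf v p
  unfold LS
  rw [DD_mul he (he.mul hg), DD_mul he hg, h1]
  have h2 : ∀ i, DD (ei i) (DD (ei i) (fun p => Real.exp (f p) * (Real.exp (f p) * g p))) p
      = Real.exp (f p) ^ 2 * ((2 * DD (ei i) (DD (ei i) f) p + 4 * DD (ei i) f p ^ 2) * g p
        + (DD (ei i) (DD (ei i) g) p + 4 * (DD (ei i) f p * DD (ei i) g p))) := by
    intro i
    rw [DD2_mul he (he.mul hg), DD2_mul he hg, DD_mul he hg, h1, DD_mul (hf.DD _) he, h1]
    ring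
  simp_rw [h2]
  rw [← Finset.mul_sum, Finset.sum_add_distrib, ← Finset.sum_mul]
  ring

variable (P)
def Par.chi (a : ℝ) : XX N → ℝ := P.cut a e0
def Par.psi (a : ℝ) (p : XX N) : ℝ := Real.exp (P.ph a p) * (Real.exp (P.ph a p) * P.cut a e1 p)
def Par.Hh (a : ℝ) (p : XX N) : ℝ :=
  (-2 * DD et (P.ph a) p + ∑ i, (2 * DD (ei i) (DD (ei i) (P.ph a)) p + 4 * DD (ei i) (P.ph a) p ^ 2))
      * P.cut a e1 p
        + (-(P.cut a (deriv e1) p * DD et (P.Th a) p) +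
          ∑ i, ((P.cut a (deriv (deriv e1)) p * DD (ei i) (P.Th a) p ^ 2
              + P.cut a (deriv e1) p * DD (ei i) (DD (ei i) (P.Th a)) p)
            + 4 * (DD (ei i) (P.ph a) p * (P.cut a (deriv e1) p * DD (ei i) (P.Th a) p))))
def Par.Lc (a : ℝ) (p : XX N) : ℝ :=
  P.cut a (deriv e0) p * DD et (P.Th a) p +
    ∑ i, (P.cut a (deriv (deriv e0)) p * DD (ei i) (P.Th a) p ^ 2
              + P.cut a (deriv e0) p * DD (ei i) (DD (ei i) (P.Th a)) p)
variable {P}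

lemma PB_Hh : P.PB P.Hh := by
  unfold Par.Hh
  have c0 := PB_cut (P := P) e1_CS
  have c1 := PB_cut (P := P) e1_CS.deriv
  have c2 := PB_cut (P := P) e1_CS.deriv.deriv
  exact ((((PB_const _).mul PB_ph_t).add (Par.PB.sum fun i => ((PB_const _).mul (PB_ph_xx i)).add
    ((PB_const _).mul (PB_ph_x i).sq))).mul c0).add
    ((c1.mul PB_Th_t).neg.add (Par.PB.sum fun i => ((c2.mul (PB_Th_x i).sq).add
      (c1.mul (PB_Th_xx i))).add ((PB_const _).mul ((PB_ph_x i).mul (c1.mul (PB_Th_x i))))))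
lemma PB_Lc : P.PB P.Lc := by
  unfold Par.Lc
  have c1 := PB_cut (P := P) e0_CS
  have c2 := PB_cut (P := P) e0_CS.deriv
  exact (c1.mul PB_Th_t).add (Par.PB.sum fun i => (c2.mul (PB_Th_x i).sq).add (c1.mul (PB_Th_xx i)))

lemma Par.LS_psi {a : ℝ} (ha : 0 < a) (p : XX N) :
    LS (P.psi a) p = Real.exp (P.ph a p) ^ 2 * P.Hh a p := by
  have := LS_exp (P.ph_sm a) (P.cut_sm ha e1_CS.toC0) p
  unfold Par.psi
  rw [this]
  simp_rw [P.cut_DD2 ha e1_CS.toC0, P.cut_DD ha e1_CS.toC0]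
  rfl
lemma Par.LL_chi {a : ℝ} (ha : 0 < a) (p : XX N) : LL (P.chi a) p = P.Lc a p := by
  unfold Par.chi LL
  simp_rw [P.cut_DD2 ha e0_C0, P.cut_DD ha e0_C0]
  rfl

lemma Par.cut_far {a : ℝ} {η : ℝ → ℝ} (hη : CS η) {p : XX N} (h : ¬ (p ∈ P.KK a ∧ P.Th a p ≤ 9 / 4)) :
    P.cut a η p = 0 := by
  by_contra hh
  have h1 := P.cut_ne hη.toC0 hh
  apply h
  refine ⟨h1, ?_⟩
  by_contra h2; push Not at h2
  apply hh
  unfold Par.cut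
  rw [hη.z2 _ h2]; simp

lemma vol_box : ∃ M : ℝ, 0 ≤ M ∧ ∀ a, 1 ≤ a → volume.real (P.box a) ≤ M * a ^ N := by
  refine ⟨9 * P.T * (P.Rm ^ N * volume.real (closedBall (0 : EE N) 1)), ?_, fun a ha => ?_⟩
  · have := P.hT; have := P.Rm_nonneg; positivity
  · have h : volume.real (P.box a) = volume.real (Icc (-8 * P.T) P.T) *
        volume.real (closedBall (0 : EE N) (P.Rm * a)) := by
      unfold Par.box
      rw [Measure.real, Measure.volume_eq_prod, Measure.prod_prod, ENNReal.toReal_mul]; rfl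
    rw [h]
    have hT := P.hT
    have h2 : volume.real (closedBall (0 : EE N) (P.Rm * a)) =
        (P.Rm * a) ^ N * volume.real (closedBall (0 : EE N) 1) := by
      have := Measure.addHaar_closedBall' (volume : Measure (EE N)) 0
        (r := P.Rm * a) (mul_nonneg P.Rm_nonneg (by linarith))
      rw [Measure.real, this, ENNReal.toReal_mul]
      have h3 : 0 ≤ P.Rm * a := mul_nonneg P.Rm_nonneg (by linarith)
      rw [ENNReal.toReal_ofReal (by positivity)]
      simp [Measure.real]
    rw [h2, Real.volume_real_Icc_of_le (by linarith), mul_pow]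
    apply le_of_eq; ring

end BU

namespace BU
variable {N : ℕ}
variable {P : Par N}

lemma Par.k_ge {t : ℝ} (h1 : t ≤ P.T) : 2 * P.c ≤ P.k t := by
  unfold Par.k
  have := P.hc
  have := P.hcT
  have : 256 * P.c * t ≤ 1 := by nlinarith
  nlinarith

lemma Par.ph_eq {a : ℝ} (ha : 0 < a) (p : XX N) :
    P.ph a p = a * P.B * P.Th a p - (P.k p.1 - P.c) * ‖p.2‖ ^ 2 := by
  have := P.Th_eq (a := a) p
  rw [mul_assoc, this]
  unfold Par.ph QQ
  field_simp; ring

lemma Par.wbound {a : ℝ} (ha : 0 < a) {p : XX N} (h1 : p.1 ≤ P.T) {v : ℝ}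
    (hv : |v| ≤ Real.exp (P.c * ‖p.2‖ ^ 2)) (hT : P.Th a p ≤ 9 / 4) :
    Real.exp (P.ph a p) ^ 2 * v ^ 2 ≤ Real.exp (9 / 4 * a * P.B) ^ 2 := by
  rw [← mul_pow, ← sq_abs (_ * v), abs_mul, Real.abs_exp]
  gcongr
  calc Real.exp (P.ph a p) * |v| ≤ Real.exp (P.ph a p) * Real.exp (P.c * ‖p.2‖ ^ 2) := by gcongr
    _ = Real.exp (P.ph a p + P.c * ‖p.2‖ ^ 2) := (Real.exp_add _ _).symm
    _ ≤ _ := by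
      apply Real.exp_le_exp.2
      rw [P.ph_eq ha]
      have h2 := P.k_ge h1
      have h3 : 0 ≤ (P.k p.1 - 2 * P.c) * ‖p.2‖ ^ 2 := mul_nonneg (by linarith) (sq_nonneg _)
      have h4 : a * P.B * P.Th a p ≤ a * P.B * (9 / 4) :=
        mul_le_mul_of_nonneg_left hT (mul_nonneg ha.le P.hB.le)
      nlinarith

theorem main_est {V : XX N → ℝ} {C : ℝ} (hC : 0 ≤ C) (hV : Continuous V)
    (hPW : ∀ p : XX N, 0 < p.1 → p.1 < P.T → 0 < p.2 P.i0 → PW V C p)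
    (hV0 : ∀ p : XX N, p.1 ≤ 0 → V p = 0)
    (hVb : ∀ p : XX N, 0 < p.1 → p.1 < P.T → 0 < p.2 P.i0 → |V p| ≤ Real.exp (P.c * ‖p.2‖ ^ 2)) :
    ∃ M : ℝ, 0 ≤ M ∧ ∃ n : ℕ, ∃ a0 : ℝ, 1 ≤ a0 ∧ ∀ a, a0 ≤ a →
      ∫ p, (Real.exp (P.ph a p) * P.chi a p) ^ 2 * V p ^ 2
        ≤ M * a ^ n * Real.exp (9 / 4 * a * P.B) ^ 2 := by
  -- gradient bound
  have c1 := PB_cut (P := P) e0_CS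
  obtain ⟨M1, hM1, n1, hgrad⟩ : P.PB (fun a p => ∑ i, (P.cut a (deriv e0) p * DD (ei i) (P.Th a) p) ^ 2) :=
    Par.PB.sum fun i => (c1.mul (PB_Th_x i)).sq
  -- error
  let F : ℝ → XX N → ℝ := fun a p => 3 * P.Lc a p ^ 2 +
    12 * (M1 * a ^ n1) * (1 / 2 * |P.Hh a p| + C * P.cut a e1 p)
  have hF : P.PB F := ((PB_const _).mul PB_Lc.sq).add
    (((PB_const _).mul ((PB_const _).mul (PB_apow n1))).mul
      (((PB_const _).mul PB_Hh.abs).add ((PB_const _).mul (PB_cut e1_CS))))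
  obtain ⟨M2, hM2, n2, hF2⟩ := hF
  obtain ⟨M3, hM3, hvol⟩ := vol_box (P := P)
  obtain ⟨a1, ha1⟩ : ∃ a1 : ℝ, 3 * C ^ 2 + 1 ≤ 7 * P.T * a1 * (P.B / (729 * P.T ^ 3)) - 256 * P.c ^ 2 := by
    have := P.hT; have := P.hB
    refine ⟨(3 * C ^ 2 + 1 + 256 * P.c ^ 2) / (7 * P.T * (P.B / (729 * P.T ^ 3))), ?_⟩
    apply le_of_eq; field_simp; ring
  refine ⟨M2 * M3, by positivity, n2 + N, max 1 a1, le_max_left _ _, fun a haa => ?_⟩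
  have ha : 1 ≤ a := le_trans (le_max_left _ _) haa
  have ha0 : 0 < a := by linarith
  have haa1 : a1 ≤ a := le_trans (le_max_right _ _) haa
  set φ := P.ph a with hφdef
  have hφ : Sm φ := P.ph_sm a
  have hk : Sm (fun p : XX N => P.k p.1) := sm_time P.k_sm
  have hχ : Sm (P.chi a) := P.cut_sm ha0 e0_C0
  have hχc : HasCompactSupport (P.chi a) := P.cut_cs ha0 e0_C0
  have hc1 : Sm (P.cut a e1) := P.cut_sm ha0 e1_CS.toC0
  have hc1c : HasCompactSupport (P.cut a e1) := P.cut_cs ha0 e1_CS.toC0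
  have hψ : Sm (P.psi a) := hφ.exp.mul (hφ.exp.mul hc1)
  have hψ' : P.psi a = (fun p => Real.exp (φ p) * Real.exp (φ p)) * P.cut a e1 := by
    funext p; simp [Par.psi, hφdef, mul_assoc]
  have hψc : HasCompactSupport (P.psi a) := by rw [hψ']; exact hc1c.mul_left
  have hψs : tsupport (P.psi a) ⊆ P.KK a := by
    rw [hψ']; exact (tsupport_mul_subset_right).trans (P.cut_ts e1_CS.toC0)
  let O : Set (XX N) := {p | p.1 < P.T ∧ 0 < p.2 P.i0}
  have hO : IsOpen O := by
    apply IsOpen.inter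
    · exact isOpen_lt continuous_fst continuous_const
    · exact isOpen_lt continuous_const (sm_coord P.i0).cont
  have hKO : P.KK a ⊆ O := fun p hp => ⟨(P.KK_x ha0 hp).2.1, (P.KK_x ha0 hp).1⟩
  have cn : ∀ p, 0 ≤ P.cut a e1 p := by
    intro p; unfold Par.cut; split_ifs
    · exact e1_nonneg _
    · exact le_rfl
  have W := weighted_V (φ := φ) (k := fun p => P.k p.1) (V := V) (χ := P.chi a) (ψ := P.psi a) (O := O)
    (C := C) (Pc := M1 * a ^ n1) hφ hk hV hO (fun p hp h0 => hPW p h0 hp.1 hp.2) hV0 hχ hχc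
    ((P.cut_ts e0_C0).trans hKO) hψ hψc (hψs.trans hKO)
    (by
      intro i p
      apply DD_of_line hk
      simp only [time_line]
      exact hasDerivAt_const _ _)
    (fun i j p => P.ph_xx a i j p) hC (by positivity)
    (by
      intro p
      unfold Par.psi
      have := cn p
      positivity)
    (by
      intro p
      unfold Par.chi
      simp_rw [P.cut_DD ha0 e0_C0]
      by_cases h0 : P.cut a (deriv e0) p = 0
      · simp only [h0]
        have : 0 ≤ P.psi a p := by unfold Par.psi; have := cn p; positivity
        have : 0 ≤ M1 * a ^ n1 * P.psi a p := by positivity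
        simpa using this
      · have hK := P.cut_ne e0_CS.toC0 h0
        have hb := P.KK_box ha0 hK
        have h1 := le_trans (le_abs_self _) (hgrad a ha p hb)
        have h2 : P.cut a e1 p = 1 := by
          unfold Par.cut at h0 ⊢
          split_ifs at h0 ⊢ with h3
          · apply e1_one
            · by_contra hh; push Not at hh; exact h0 (de0_zero (Or.inl hh))
            · by_contra hh; push Not at hh; exact h0 (de0_zero (Or.inr hh))
          · exact absurd rfl h0
        have h3 : P.psi a p = Real.exp (φ p) ^ 2 := by
          unfold Par.psi; rw [h2, mul_one, pow_two]
        rw [h3]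
        exact mul_le_mul_of_nonneg_right h1 (sq_nonneg _))
  -- integrability
  have hE := hφ.exp.cont
  have csq : HasCompactSupport (fun p => (Real.exp (φ p) * P.chi a p) ^ 2) := by
    have h1 : HasCompactSupport ((fun p => Real.exp (φ p) ^ 2 * P.chi a p) * P.chi a) := hχc.mul_left
    have h2 : (fun p => (Real.exp (φ p) * P.chi a p) ^ 2) =
        (fun p => Real.exp (φ p) ^ 2 * P.chi a p) * P.chi a := by
      funext p; simp; ring
    rw [h2]; exact h1
  have csV : HasCompactSupport (fun p => (Real.exp (φ p) * P.chi a p) ^ 2 * V p ^ 2) := csq.mul_right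
  have ctV : Continuous (fun p => (Real.exp (φ p) * P.chi a p) ^ 2 * V p ^ 2) :=
    ((hE.mul hχ.cont).pow 2).mul (hV.pow 2)
  have iV : Integrable (fun p => (Real.exp (φ p) * P.chi a p) ^ 2 * V p ^ 2) := integ ctV csV
  have iZ : Integrable (fun p => Zf φ (fun p => P.k p.1) p * ((Real.exp (φ p) * P.chi a p) ^ 2 * V p ^ 2)) :=
    integ ((Zf_cont hφ hk).mul ctV) csV.mul_left
  have iC : Integrable (fun p => 3 * C ^ 2 * ((Real.exp (φ p) * P.chi a p) ^ 2 * V p ^ 2)) :=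
    iV.const_mul _
  let Ee : XX N → ℝ := fun p => (3 * (Real.exp (φ p) * LL (P.chi a) p) ^ 2 +
    12 * (M1 * a ^ n1) * (1 / 2 * |LS (P.psi a) p| + C * P.psi a p)) * V p ^ 2
  have hEF : ∀ p, Ee p = F a p * (Real.exp (φ p) ^ 2 * V p ^ 2) := by
    intro p
    simp only [Ee, F]
    rw [P.LL_chi ha0, P.LS_psi ha0, abs_mul, abs_of_nonneg (sq_nonneg _)]
    unfold Par.psi
    ring
  have hEz : ∀ p, ¬ (p ∈ P.KK a ∧ P.Th a p ≤ 9 / 4) → F a p = 0 := by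
    intro p hp
    have d1 := P.cut_far e1_CS hp
    have d2 := P.cut_far e1_CS.deriv hp
    have d3 := P.cut_far e1_CS.deriv.deriv hp
    have d4 := P.cut_far e0_CS hp
    have d5 := P.cut_far e0_CS.deriv hp
    simp [F, Par.Lc, Par.Hh, d1, d2, d3, d4, d5]
  have cE : Continuous Ee := by
    have t1 := hχ.LL.cont
    have t2 := hψ.LS.cont
    have t3 := hψ.cont
    simp only [Ee]
    exact ((continuous_const.mul ((hE.mul t1).pow 2)).add (continuous_const.mul
      ((continuous_const.mul t2.abs).add (continuous_const.mul t3)))).mul (hV.pow 2)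
  have csE : HasCompactSupport Ee := by
    apply HasCompactSupport.intro (P.box_compact a)
    intro p hp
    rw [hEF, hEz p (fun h => hp (P.KK_box ha0 h.1))]; simp
  have iE : Integrable Ee := integ cE csE
  have W2 : ∫ p, Zf φ (fun p => P.k p.1) p * ((Real.exp (φ p) * P.chi a p) ^ 2 * V p ^ 2) ≤
      (∫ p, 3 * C ^ 2 * ((Real.exp (φ p) * P.chi a p) ^ 2 * V p ^ 2)) + ∫ p, Ee p := by
    rw [← integral_add iC iE]
    refine le_trans (le_of_eq ?_) (W.trans (le_of_eq ?_))
    · congr 1; funext p; ring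
    · congr 1; funext p; simp only [Ee]; ring
  have W3 : ∫ p, (Real.exp (φ p) * P.chi a p) ^ 2 * V p ^ 2 ≤
      (∫ p, Zf φ (fun p => P.k p.1) p * ((Real.exp (φ p) * P.chi a p) ^ 2 * V p ^ 2)) -
      (∫ p, 3 * C ^ 2 * ((Real.exp (φ p) * P.chi a p) ^ 2 * V p ^ 2)) := by
    rw [← integral_sub iZ iC]
    apply integral_mono iV (iZ.sub iC)
    intro p
    simp only [Pi.sub_apply]
    rw [← sub_mul]
    by_cases h0 : (Real.exp (φ p) * P.chi a p) ^ 2 * V p ^ 2 = 0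
    · rw [h0]; simp
    have hx0 : P.chi a p ≠ 0 := by intro h; apply h0; simp [h]
    have hv0 : V p ≠ 0 := by intro h; apply h0; simp [h]
    have ht : 0 < p.1 := by
      by_contra hh; push Not at hh; exact hv0 (hV0 p hh)
    have hK := P.cut_ne e0_C0 hx0
    have hKx := P.KK_x ha0 hK
    have hTh : 1 ≤ P.Th a p := by
      by_contra hh; push Not at hh
      apply hx0
      unfold Par.chi Par.cut
      rw [e0_zero hh.le]; simp
    have hZ := P.Zf_lower a ha0.le p ht.le hKx.2.1.le hKx.1.le
    have hT := P.hT
    have hB := P.hB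
    have hx1 : P.B / (729 * P.T ^ 3) ≤ p.2 P.i0 := by
      rw [div_le_iff₀ (by positivity)]
      nlinarith [hKx.2.2]
    have : 7 * P.T * a1 * (P.B / (729 * P.T ^ 3)) ≤ 7 * P.T * a * p.2 P.i0 := by
      calc _ ≤ 7 * P.T * a * (P.B / (729 * P.T ^ 3)) := by gcongr
        _ ≤ _ := by gcongr
    have hge : 1 ≤ Zf φ (fun p => P.k p.1) p - 3 * C ^ 2 := by linarith
    calc _ = 1 * ((Real.exp (φ p) * P.chi a p) ^ 2 * V p ^ 2) := (one_mul _).symm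
      _ ≤ _ := mul_le_mul_of_nonneg_right hge (by positivity)
  have W4 : ∫ p, Ee p ≤ ∫ p, (P.box a).indicator
      (fun _ => M2 * a ^ n2 * Real.exp (9 / 4 * a * P.B) ^ 2) p := by
    apply integral_mono iE
    · exact (integrable_indicator_iff (P.box_compact a).measurableSet).2
        (integrableOn_const (P.box_compact a).measure_lt_top.ne)
    intro p
    simp only
    have hnn : 0 ≤ M2 * a ^ n2 * Real.exp (9 / 4 * a * P.B) ^ 2 := by positivity
    have hi : 0 ≤ (P.box a).indicator
      (fun _ => M2 * a ^ n2 * Real.exp (9 / 4 * a * P.B) ^ 2) p := indicator_nonneg (fun _ _ => hnn) _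
    rw [hEF]
    by_cases hz : p ∈ P.KK a ∧ P.Th a p ≤ 9 / 4
    swap
    · rw [hEz p hz]; simpa using hi
    by_cases hv0 : V p = 0
    · rw [hv0]; simpa using hi
    have ht : 0 < p.1 := by
      by_contra hh; push Not at hh; exact hv0 (hV0 p hh)
    have hKx := P.KK_x ha0 hz.1
    have hb := P.KK_box ha0 hz.1
    rw [indicator_of_mem hb]
    have h1 := P.wbound ha0 hKx.2.1.le (hVb p ht hKx.2.1 hKx.1) hz.2
    exact mul_le_mul (le_trans (le_abs_self _) (hF2 a ha p hb)) h1 (by positivity) (by positivity)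
  have W5 : ∫ p, (P.box a).indicator (fun _ => M2 * a ^ n2 * Real.exp (9 / 4 * a * P.B) ^ 2) p
      ≤ M2 * M3 * a ^ (n2 + N) * Real.exp (9 / 4 * a * P.B) ^ 2 := by
    rw [integral_indicator (P.box_compact a).measurableSet, setIntegral_const, smul_eq_mul]
    calc _ ≤ (M3 * a ^ N) * (M2 * a ^ n2 * Real.exp (9 / 4 * a * P.B) ^ 2) :=
          mul_le_mul_of_nonneg_right (hvol a ha) (by positivity)
      _ = _ := by rw [pow_add]; ring
  linarith

end BU

namespace BU
variable {N : ℕ}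

theorem vanish (i0 : Fin N) {T c C : ℝ} (hT : 0 < T) (hc : 0 < c) (hcT : 256 * c * T ≤ 1)
    {V : XX N → ℝ} (hC : 0 ≤ C) (hV : Continuous V)
    (hPW : ∀ p : XX N, 0 < p.1 → p.1 < T → 0 < p.2 i0 → PW V C p)
    (hV0 : ∀ p : XX N, p.1 ≤ 0 → V p = 0)
    (hVb : ∀ p : XX N, 0 < p.1 → p.1 < T → 0 < p.2 i0 → |V p| ≤ Real.exp (c * ‖p.2‖ ^ 2))
    (p0 : XX N) (h1 : 0 < p0.1) (h2 : p0.1 < T) (h3 : 0 < p0.2 i0) : V p0 = 0 := by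
  by_contra hne
  have hB : 0 < (T - p0.1) ^ 2 * (p0.1 + 8 * T) * p0.2 i0 / 6 := by
    have : 0 < T - p0.1 := by linarith
    positivity
  let P : Par N := ⟨T, c, _, i0, hT, hc, hB, hcT⟩
  have hPB : P.G p0.1 * p0.2 i0 = 6 * P.B := by
    simp only [P, Par.G]; ring
  obtain ⟨M, hM, n, a0, ha0, hmain⟩ := main_est (P := P) hC hV hPW hV0 hVb
  set R := ‖p0.2‖ ^ 2 + 1 with hR
  have hRpos : 0 < R := by positivity
  have hBp : 0 < P.B := hB
  have ev : ∀ᶠ p in 𝓝 p0, |V p0| / 2 < |V p| ∧ 0 < p.1 ∧ p.1 < T ∧ 11 / 2 * P.B < P.G p.1 * p.2 i0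
      ∧ ‖p.2‖ ^ 2 < R := by
    have hv : |V p0| / 2 < |V p0| := by have := abs_pos.2 hne; linarith
    have e1 := (hV.abs.continuousAt (x := p0)).eventually (Ioi_mem_nhds hv)
    have e2 := (continuous_fst.continuousAt (x := p0)).eventually (Ioi_mem_nhds h1)
    have e3 := (continuous_fst.continuousAt (x := p0)).eventually (Iio_mem_nhds h2)
    have c4 : Continuous (fun p : XX N => P.G p.1 * p.2 i0) :=
      ((sm_time P.G_sm).mul (sm_coord i0)).cont
    have e4 := (c4.continuousAt (x := p0)).eventually
      (Ioi_mem_nhds (show 11 / 2 * P.B < P.G p0.1 * p0.2 i0 by rw [hPB]; linarith))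
    have e5 := ((sm_normsq (N := N)).cont.continuousAt (x := p0)).eventually
      (Iio_mem_nhds (show ‖p0.2‖ ^ 2 < R by rw [hR]; linarith))
    filter_upwards [e1, e2, e3, e4, e5] with p a1 a2 a3 a4 a5 using ⟨a1, a2, a3, a4, a5⟩
  obtain ⟨r, hr, hball⟩ := Metric.nhds_basis_closedBall.mem_iff.1 ev
  set U := closedBall p0 r with hU
  have hUm : MeasurableSet U := isClosed_closedBall.measurableSet
  have hUf : volume U ≠ ⊤ := (isCompact_closedBall p0 r).measure_lt_top.ne
  have hUp : 0 < volume.real U :=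
    ENNReal.toReal_pos (measure_closedBall_pos volume p0 hr).ne' hUf
  set v := |V p0| / 2 with hv
  have hvp : 0 < v := by have := abs_pos.2 hne; positivity
  have key : ∀ a, a0 ≤ a → 2 * c * R / P.B ≤ a →
      volume.real U * (Real.exp (5 * a * P.B - 3 * c * R) ^ 2 * v ^ 2)
        ≤ M * a ^ n * Real.exp (9 / 4 * a * P.B) ^ 2 := by
    intro a haa hab
    refine le_trans ?_ (hmain a haa)
    have hap : 0 < a := by linarith
    have hχ : Sm (P.chi a) := P.cut_sm hap e0_C0
    have hχc : HasCompactSupport (P.chi a) := P.cut_cs hap e0_C0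
    have ctV : Continuous (fun p => (Real.exp (P.ph a p) * P.chi a p) ^ 2 * V p ^ 2) :=
      (((P.ph_sm a).exp.cont.mul hχ.cont).pow 2).mul (hV.pow 2)
    have csV : HasCompactSupport (fun p => (Real.exp (P.ph a p) * P.chi a p) ^ 2 * V p ^ 2) := by
      have h1 : HasCompactSupport ((fun p => Real.exp (P.ph a p) ^ 2 * P.chi a p * V p ^ 2) * P.chi a) :=
        hχc.mul_left
      have h2 : (fun p => (Real.exp (P.ph a p) * P.chi a p) ^ 2 * V p ^ 2) =
          (fun p => Real.exp (P.ph a p) ^ 2 * P.chi a p * V p ^ 2) * P.chi a := by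
        funext p; simp; ring
      rw [h2]; exact h1
    have e : volume.real U * (Real.exp (5 * a * P.B - 3 * c * R) ^ 2 * v ^ 2)
        = ∫ p, U.indicator (fun _ => Real.exp (5 * a * P.B - 3 * c * R) ^ 2 * v ^ 2) p := by
      rw [integral_indicator hUm, setIntegral_const, smul_eq_mul]
    rw [e]
    apply integral_mono ((integrable_indicator_iff hUm).2 (integrableOn_const hUf)) (integ ctV csV)
    intro p
    by_cases hp : p ∈ U
    swap
    · rw [indicator_of_notMem hp]; positivity
    rw [indicator_of_mem hp]
    obtain ⟨b1, b2, b3, b4, b5⟩ := hball hp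
    have d1 := P.Th_eq (a := a) p
    have hcR : c / a * ‖p.2‖ ^ 2 ≤ P.B / 2 := by
      have : c / a * ‖p.2‖ ^ 2 ≤ c / a * R := by gcongr
      refine this.trans ?_
      rw [div_le_iff₀ hBp] at hab
      rw [div_mul_eq_mul_div, div_le_iff₀ hap]
      linarith
    have d2 : 5 * P.B ≤ P.B * P.Th a p := by
      rw [d1]; change 5 * P.B ≤ P.G p.1 * p.2 i0 - c / a * ‖p.2‖ ^ 2; linarith
    have d3 : 5 ≤ P.Th a p := by
      by_contra hh; push Not at hh; nlinarith
    have d4 : P.chi a p = 1 := by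
      unfold Par.chi Par.cut
      rw [if_pos ⟨by change -8 * T < p.1; linarith, b3⟩, e0_one (by linarith)]
    have d5 : 5 * a * P.B - 3 * c * R ≤ P.ph a p := by
      rw [P.ph_eq hap]
      have k1 : (P.k p.1 - P.c) ≤ 3 * c := by
        change 4 * c - 64 * c ^ 2 * p.1 - c ≤ 3 * c
        have : 0 ≤ 64 * c ^ 2 * p.1 := by positivity
        linarith
      have k2 : (P.k p.1 - P.c) * ‖p.2‖ ^ 2 ≤ 3 * c * R := by
        calc _ ≤ 3 * c * ‖p.2‖ ^ 2 := mul_le_mul_of_nonneg_right k1 (sq_nonneg _)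
          _ ≤ _ := by gcongr
      have k3 := mul_le_mul_of_nonneg_left d2 hap.le
      nlinarith
    simp only
    rw [d4, mul_one, ← sq_abs (V p)]
    gcongr
  -- asymptotics
  set K := volume.real U * (Real.exp (-(3 * c * R)) ^ 2 * v ^ 2) with hK
  have hKp : 0 < K := by positivity
  have lo := isLittleO_pow_exp_pos_mul_atTop n hBp
  have lo2 := lo.bound (show 0 < K / (2 * (M + 1)) by positivity)
  obtain ⟨a, ha1, ha2, ha3⟩ := (lo2.and ((eventually_ge_atTop a0).and
    (eventually_ge_atTop (2 * c * R / P.B)))).exists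
  have hk := key a ha2 ha3
  have hap : 0 < a := by linarith
  rw [Real.norm_of_nonneg (by positivity), Real.norm_of_nonneg (by positivity)] at ha1
  have x1 : Real.exp (5 * a * P.B - 3 * c * R) ^ 2
      = Real.exp (-(3 * c * R)) ^ 2 * (Real.exp (P.B * a) * Real.exp (9 / 2 * (P.B * a))
        * Real.exp (9 / 4 * a * P.B) ^ 2) := by
    simp only [pow_two, ← Real.exp_add]; congr 1; ring
  rw [x1] at hk
  have y0 : 0 < Real.exp (9 / 4 * a * P.B) ^ 2 := by positivity
  have hk2 : K * (Real.exp (P.B * a) * Real.exp (9 / 2 * (P.B * a))) ≤ M * a ^ n := by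
    apply le_of_mul_le_mul_right _ y0
    calc _ = _ := by rw [hK]; ring
      _ ≤ _ := hk
  have y1 : 1 ≤ Real.exp (9 / 2 * (P.B * a)) := Real.one_le_exp (by positivity)
  have y2 : 0 < Real.exp (P.B * a) := Real.exp_pos _
  have y3 : M * a ^ n ≤ (M + 1) * (K / (2 * (M + 1)) * Real.exp (P.B * a)) := by
    calc _ ≤ (M + 1) * a ^ n := by gcongr; linarith
      _ ≤ _ := by gcongr
  have y4 : (M + 1) * (K / (2 * (M + 1)) * Real.exp (P.B * a)) = K / 2 * Real.exp (P.B * a) := by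
    field_simp
  have y5 : K * (Real.exp (P.B * a) * 1) ≤ K * (Real.exp (P.B * a) * Real.exp (9 / 2 * (P.B * a))) := by
    gcongr
  have y6 : 0 < K * Real.exp (P.B * a) := by positivity
  linarith

end BU

namespace BU
variable {N : ℕ}

def pr (i0 : Fin N) (x : EE N) : EE N := x + (max (x i0) 0 - x i0) • EuclideanSpace.single i0 1

lemma coord_cont (i0 : Fin N) : Continuous (fun x : EE N => x i0) :=
  (EuclideanSpace.proj (𝕜 := ℝ) i0).continuous

lemma pr_cont (i0 : Fin N) : Continuous (pr i0) := by
  unfold pr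
  have := coord_cont i0
  exact continuous_id.add (((this.max continuous_const).sub this).smul continuous_const)

lemma pr_of_pos {i0 : Fin N} {x : EE N} (h : 0 < x i0) : pr i0 x = x := by
  unfold pr; rw [max_eq_left h.le]; simp

lemma mem_cl {i0 : Fin N} {x : EE N} (h : 0 ≤ x i0) : x ∈ closure {y : EE N | 0 < y i0} := by
  have c : Continuous (fun s : ℝ => x + s • (EuclideanSpace.single i0 1 : EE N)) := by fun_prop
  have t : Tendsto (fun s : ℝ => x + s • (EuclideanSpace.single i0 1 : EE N)) (𝓝[>] 0) (𝓝 x) := by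
    have := c.tendsto 0
    simp only [zero_smul, add_zero] at this
    exact this.mono_left nhdsWithin_le_nhds
  apply mem_closure_of_tendsto t
  filter_upwards [self_mem_nhdsWithin] with s hs
  have : (0:ℝ) < s := hs
  simp; linarith

lemma pr_mem (i0 : Fin N) (x : EE N) : pr i0 x ∈ closure {y : EE N | 0 < y i0} := by
  apply mem_cl
  unfold pr
  simp

lemma Has2.congr {f g : ℝ → ℝ} {d : ℝ} (h : Has2 g d) (e : f =ᶠ[𝓝 0] g) : Has2 f d := by
  obtain ⟨g', h1, h2⟩ := h
  refine ⟨g', ?_, h2⟩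
  filter_upwards [h1, e.eventuallyEq_nhds] with s a b using a.congr_of_eventuallyEq b

lemma has2_line {f : EE N → ℝ} {x : EE N} (hf : ContDiffAt ℝ 2 f x) (e : EE N) :
    Has2 (fun s : ℝ => f (x + s • e)) (fderiv ℝ (fun y => fderiv ℝ f y e) x e) := by
  have hl : ∀ s : ℝ, HasDerivAt (fun s : ℝ => x + s • e) e s := by
    intro s
    simpa using ((hasDerivAt_id s).smul_const e).const_add x
  have hc : Continuous (fun s : ℝ => x + s • e) := by fun_prop
  refine ⟨fun s => fderiv ℝ f (x + s • e) e, ?_, ?_⟩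
  · have h1 : ∀ᶠ y in 𝓝 x, DifferentiableAt ℝ f y := by
      filter_upwards [hf.eventually (by simp)] with y hy
      exact hy.differentiableAt (by simp)
    have h2 : Tendsto (fun s : ℝ => x + s • e) (𝓝 0) (𝓝 x) := by
      have := hc.tendsto 0
      simpa using this
    filter_upwards [h2.eventually h1] with s hs
    exact hs.hasFDerivAt.comp_hasDerivAt s (hl s)
  · have h1 : ContDiffAt ℝ 1 (fderiv ℝ f) x := hf.fderiv_right (by norm_num)
    have h2 : DifferentiableAt ℝ (fderiv ℝ f) x := h1.differentiableAt (by simp)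
    have h3 : DifferentiableAt ℝ (fun y => fderiv ℝ f y e) x := h2.clm_apply (differentiableAt_const e)
    have h4 : HasFDerivAt (fun y => fderiv ℝ f y e) (fderiv ℝ (fun y => fderiv ℝ f y e) x)
        (x + (0:ℝ) • e) := by
      simpa using h3.hasFDerivAt
    exact h4.comp_hasDerivAt (0:ℝ) (hl 0)

theorem step (i0 : Fin N) {S : ℝ} (w : ℝ → EE N → ℝ) {C₁ C₂ : ℝ} (hC₁ : 0 < C₁) (hC₂ : 0 < C₂)
    (hcont : ContinuousOn (fun q : ℝ × EE N => w q.1 q.2) (Icc 0 S ×ˢ closure {y : EE N | 0 < y i0}))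
    (hregx : ∀ s ∈ Ioo (0:ℝ) S, ContDiffOn ℝ 2 (w s) {y : EE N | 0 < y i0})
    (hregt : ∀ y ∈ {y : EE N | 0 < y i0}, ∀ s ∈ Ioo (0:ℝ) S, DifferentiableAt ℝ (fun σ => w σ y) s)
    (hgrowth : ∀ s ∈ Ioo (0:ℝ) S, ∀ y ∈ {y : EE N | 0 < y i0}, |w s y| ≤ Real.exp (C₁ * ‖y‖ ^ 2))
    (hineq : ∀ s ∈ Ioo (0:ℝ) S, ∀ y ∈ {y : EE N | 0 < y i0},
      |deriv (fun σ => w σ y) s + lap (w s) y| ≤ C₂ * |w s y|)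
    {τ : ℝ} (hτ : 0 ≤ τ) (hτS : τ < S) (hz : ∀ y ∈ {y : EE N | 0 < y i0}, w τ y = 0)
    {s : ℝ} (hs : τ < s) (hsS : s < S) (hsT : s < τ + 1 / (256 * C₁)) (y : EE N) (hy : 0 < y i0) :
    w s y = 0 := by
  set T := min (1 / (256 * C₁)) (S - τ) with hTdef
  have hT : 0 < T := lt_min (by positivity) (by linarith)
  have hTS : τ + T ≤ S := by have := min_le_right (1 / (256 * C₁)) (S - τ); linarith
  have hcT : 256 * C₁ * T ≤ 1 := by
    have := min_le_left (1 / (256 * C₁)) (S - τ)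
    calc _ ≤ 256 * C₁ * (1 / (256 * C₁)) := by gcongr
      _ = 1 := by field_simp
  let cl : ℝ → ℝ := fun t => max 0 (min t T)
  have cl_cont : Continuous cl := by fun_prop
  have cl_mem : ∀ t, τ + cl t ∈ Icc 0 S := by
    intro t
    have a1 : 0 ≤ cl t := le_max_left _ _
    have a2 : cl t ≤ T := max_le hT.le (min_le_right _ _)
    exact ⟨by linarith, by linarith⟩
  have cl_id : ∀ t, 0 < t → t < T → cl t = t := by
    intro t h1 h2
    simp only [cl]; rw [min_eq_left h2.le, max_eq_right h1.le]
  let V : XX N → ℝ := fun p => w (τ + cl p.1) (pr i0 p.2)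
  have hVeq : ∀ p : XX N, 0 < p.1 → p.1 < T → 0 < p.2 i0 → V p = w (τ + p.1) p.2 := by
    intro p h1 h2 h3
    simp only [V]; rw [cl_id _ h1 h2, pr_of_pos h3]
  have hV : Continuous V := by
    have : Continuous (fun p : XX N => (τ + cl p.1, pr i0 p.2)) :=
      (continuous_const.add (cl_cont.comp continuous_fst)).prodMk ((pr_cont i0).comp continuous_snd)
    exact hcont.comp_continuous this (fun p => ⟨cl_mem _, pr_mem _ _⟩)
  have hz2 : ∀ y ∈ closure {y : EE N | 0 < y i0}, w τ y = 0 := by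
    have hcw : ContinuousOn (w τ) (closure {y : EE N | 0 < y i0}) := by
      have : ContinuousOn (fun y : EE N => (τ, y)) (closure {y : EE N | 0 < y i0}) := by fun_prop
      exact hcont.comp this (fun y hy => ⟨⟨hτ, hτS.le⟩, hy⟩)
    have he : EqOn (w τ) (fun _ => 0) {y : EE N | 0 < y i0} := fun y hy => hz y hy
    exact he.of_subset_closure hcw continuousOn_const subset_closure subset_rfl
  have hV0 : ∀ p : XX N, p.1 ≤ 0 → V p = 0 := by
    intro p hp
    have : cl p.1 = 0 := by
      simp only [cl]; exact max_eq_left ((min_le_left _ _).trans hp)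
    simp only [V]; rw [this, add_zero]
    exact hz2 _ (pr_mem _ _)
  have hVb : ∀ p : XX N, 0 < p.1 → p.1 < T → 0 < p.2 i0 → |V p| ≤ Real.exp (C₁ * ‖p.2‖ ^ 2) := by
    intro p h1 h2 h3
    rw [hVeq p h1 h2 h3]
    exact hgrowth _ ⟨by linarith, by linarith⟩ _ h3
  have hOo : IsOpen {p : XX N | 0 < p.1 ∧ p.1 < T ∧ 0 < p.2 i0} :=
    (isOpen_lt continuous_const continuous_fst).inter ((isOpen_lt continuous_fst continuous_const).inter
      (isOpen_lt continuous_const (sm_coord i0).cont))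
  have hPW : ∀ p : XX N, 0 < p.1 → p.1 < T → 0 < p.2 i0 → PW V C₂ p := by
    intro p h1 h2 h3
    have hσ : τ + p.1 ∈ Ioo 0 S := ⟨by linarith, by linarith⟩
    have hnear : ∀ v : XX N, ∀ᶠ s : ℝ in 𝓝 0, V (p + s • v) = w (τ + (p + s • v).1) (p + s • v).2 := by
      intro v
      have c : Continuous (fun s : ℝ => p + s • v) := by fun_prop
      have t : Tendsto (fun s : ℝ => p + s • v) (𝓝 0) (𝓝 p) := by simpa using c.tendsto 0
      filter_upwards [t.eventually (hOo.mem_nhds ⟨h1, h2, h3⟩)] with s hs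
      exact hVeq _ hs.1 hs.2.1 hs.2.2
    refine ⟨deriv (fun σ => w σ p.2) (τ + p.1), fun i => fderiv ℝ (fun y => fderiv ℝ (w (τ + p.1)) y
      (EuclideanSpace.single i 1)) p.2 (EuclideanSpace.single i 1), ?_, ?_, ?_⟩
    · have h4 := (hregt p.2 h3 _ hσ).hasDerivAt
      have h5 : HasDerivAt (fun s : ℝ => w ((τ + p.1) + s) p.2)
          (deriv (fun σ => w σ p.2) (τ + p.1)) 0 := by
        have := HasDerivAt.comp_const_add (f := fun σ => w σ p.2) (τ + p.1) 0
          (by rw [add_zero]; exact h4)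
        exact this
      refine h5.congr_of_eventuallyEq ?_
      filter_upwards [hnear et] with s hs
      rw [hs]; simp [et, add_assoc]
    · intro i
      have hH : {y : EE N | 0 < y i0} ∈ 𝓝 p.2 :=
        (isOpen_lt continuous_const (coord_cont i0)).mem_nhds h3
      have h4 := has2_line ((hregx _ hσ).contDiffAt hH) (EuclideanSpace.single i 1)
      refine h4.congr ?_
      filter_upwards [hnear (ei i)] with s hs
      rw [hs]; simp [ei]
    · rw [hVeq p h1 h2 h3]
      exact hineq _ hσ _ h3
  have hsT' : s - τ < T := lt_min (by linarith) (by linarith)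
  have := vanish i0 hT hC₁ hcT hC₂.le hV hPW hV0 hVb (s - τ, y) (by simpa using hs) hsT' hy
  rw [hVeq _ (by simpa using hs) hsT' hy] at this
  simpa using this

end BU

theorem backward_uniqueness_halfspace
    (N : ℕ) (hN : 0 < N) (S : ℝ) (hS : 0 < S)
    (w : ℝ → EuclideanSpace ℝ (Fin N) → ℝ)
    (C₁ C₂ : ℝ) (hC₁ : 0 < C₁) (hC₂ : 0 < C₂)
    -- regularity: `w ∈ C^{1,2}([0,S] × closure ℝ^N_+)`
    (hcont : ContinuousOn (fun q : ℝ × EuclideanSpace ℝ (Fin N) => w q.1 q.2)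
      (Icc 0 S ×ˢ closure {y : EuclideanSpace ℝ (Fin N) | 0 < y ⟨0, hN⟩}))
    (hregx : ∀ s ∈ Ioo (0:ℝ) S,
      ContDiffOn ℝ 2 (w s) {y : EuclideanSpace ℝ (Fin N) | 0 < y ⟨0, hN⟩})
    (hregt : ∀ y ∈ {y : EuclideanSpace ℝ (Fin N) | 0 < y ⟨0, hN⟩},
      ∀ s ∈ Ioo (0:ℝ) S, DifferentiableAt ℝ (fun σ => w σ y) s)
    -- growth bound
    (hgrowth : ∀ s ∈ Ioo (0:ℝ) S, ∀ y ∈ {y : EuclideanSpace ℝ (Fin N) | 0 < y ⟨0, hN⟩},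
      |w s y| ≤ Real.exp (C₁ * ‖y‖ ^ 2))
    -- differential inequality for the backward heat operator
    (hineq : ∀ s ∈ Ioo (0:ℝ) S, ∀ y ∈ {y : EuclideanSpace ℝ (Fin N) | 0 < y ⟨0, hN⟩},
      |deriv (fun σ => w σ y) s + lap (w s) y| ≤ C₂ * |w s y|)
    -- vanishing at time `0`
    (hzero : ∀ y ∈ {y : EuclideanSpace ℝ (Fin N) | 0 < y ⟨0, hN⟩}, w 0 y = 0) :
    ∀ s ∈ Ico (0:ℝ) S, ∀ y ∈ {y : EuclideanSpace ℝ (Fin N) | 0 < y ⟨0, hN⟩}, w s y = 0 := by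
  set T := 1 / (256 * C₁) with hT
  have hTp : 0 < T := by positivity
  have key : ∀ n : ℕ, ∀ s ∈ Ico (0:ℝ) S, s < n * (T / 2) →
      ∀ y ∈ {y : EuclideanSpace ℝ (Fin N) | 0 < y ⟨0, hN⟩}, w s y = 0 := by
    intro n
    induction n with
    | zero =>
      intro s hs h
      simp at h
      exact absurd hs.1 (not_le.2 h)
    | succ n ih =>
      intro s hs h y hy
      push_cast at h
      by_cases h0 : s ≤ T / 2
      · rcases hs.1.eq_or_lt with h1 | h1
        · rw [← h1]; exact hzero y hy
        · exact BU.step ⟨0, hN⟩ w hC₁ hC₂ hcont hregx hregt hgrowth hineq le_rfl hS hzero h1 hs.2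
            (by rw [← hT]; linarith) y hy
      · push Not at h0
        have hτ : s - T / 2 ∈ Ico (0:ℝ) S := ⟨by linarith, by linarith [hs.2]⟩
        exact BU.step ⟨0, hN⟩ w hC₁ hC₂ hcont hregx hregt hgrowth hineq hτ.1 hτ.2
          (ih _ hτ (by linarith)) (by linarith) hs.2 (by rw [← hT]; linarith) y hy
  intro s hs y hy
  obtain ⟨n, hn⟩ := exists_nat_gt (s / (T / 2))
  refine key n s hs ?_ y hy
  rwa [div_lt_iff₀ (by positivity)] at hn
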